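/- arXiv:2107.11900 — 7 statements merged into one kernel-verified Lean document; each statement's English description precedes it below -/
import Mathlib

section
/- There exists a coloring of the Euclidean plane ℝ² with 7 colors avoiding unit distance; that is, a function f : ℝ² → Fin 7 such that f(x) ≠ f(y) whenever ‖x − y‖ = 1 (the Isbell hexagonal tiling). -/
/-!
Pave the plane with unit squares in horizontal rows, each row shifted by `5 / 2` with respect to
the one below, and number the squares of every row cyclically modulo `7`. Equally coloured squares
then differ by a vector `(5 / 2 * k + 7 * m, k)` with `k` and `m` integers. Two points of the same
half-open square are at distance less than its diagonal `√2`; if `(k, m) ≠ (0, 0)`, the vector is so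
long that points of the two squares are at distance more than `√2`. Hence the colouring avoids the
distance `√2`, and rescaling gives one that avoids `1`.
-/

theorem abs_sub_sub_floor_sub_floor_lt_one {R : Type*} [Ring R] [LinearOrder R]
    [IsStrictOrderedRing R] [FloorRing R] (a b : R) : |a - b - (⌊a⌋ - ⌊b⌋)| < 1 := by
  rw [sub_sub_sub_comm, Int.self_sub_floor, Int.self_sub_floor]
  exact abs_sub_lt_of_nonneg_of_lt (Int.fract_nonneg a) (Int.fract_lt_one a)
    (Int.fract_nonneg b) (Int.fract_lt_one b)

theorem abs_sub_lt_abs_of_abs_sub_lt {G : Type*} [AddCommGroup G] [LinearOrder G]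
    [IsOrderedAddMonoid G] {a b c : G} (h : |a - b| < c) : |b| - c < |a| := by
  rw [abs_sub_comm] at h
  exact sub_lt_comm.1 ((abs_sub_abs_le_abs_sub b a).trans_lt h)

/-- The colouring of the wall of half-open unit squares in which row `j` is shifted by `s * j`: the
squares of each row are numbered from left to right and coloured by their number modulo `n`. -/
noncomputable def brickColor (s : ℝ) (n : ℕ) (p : EuclideanSpace ℝ (Fin 2)) : ZMod n :=
  (⌊p 0 - s * ⌊p 1⌋⌋ : ℤ)

theorem exists_abs_sub_lt_one_of_brickColor_eq {s : ℝ} {n : ℕ} {p q : EuclideanSpace ℝ (Fin 2)}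
    (h : brickColor s n p = brickColor s n q) :
    ∃ k m : ℤ, |p 0 - q 0 - (s * k + n * m)| < 1 ∧ |p 1 - q 1 - k| < 1 := by
  obtain ⟨m, hm⟩ := (ZMod.intCast_eq_intCast_iff_dvd_sub _ _ _).1 h.symm
  have hm_real : (⌊p 0 - s * ⌊p 1⌋⌋ - ⌊q 0 - s * ⌊q 1⌋⌋ : ℝ) = n * m := mod_cast hm
  refine ⟨⌊p 1⌋ - ⌊q 1⌋, m, ?_, ?_⟩
  · calc |p 0 - q 0 - (s * (⌊p 1⌋ - ⌊q 1⌋ : ℤ) + n * m)|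
        = |(p 0 - s * ⌊p 1⌋) - (q 0 - s * ⌊q 1⌋)
            - (⌊p 0 - s * ⌊p 1⌋⌋ - ⌊q 0 - s * ⌊q 1⌋⌋)| := by
          rw [hm_real]
          push_cast
          ring_nf
      _ < 1 := abs_sub_sub_floor_sub_floor_lt_one _ _
  · exact_mod_cast abs_sub_sub_floor_sub_floor_lt_one (p 1) (q 1)

-- The first coordinate `5 / 2 * k + 7 * m` is doubled to keep it an integer.
theorem brick_translation_eq_zero_or_le_abs (k m : ℤ) :
    (k = 0 ∧ m = 0) ∨ (2 ≤ |k| ∧ 4 ≤ |5 * k + 14 * m|) ∨ 3 ≤ |k| ∨ 5 ≤ |5 * k + 14 * m| := by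
  rcases le_or_gt 3 |k| with hk | hk
  · exact .inr (.inr (.inl hk))
  · obtain ⟨_, _⟩ := abs_lt.1 hk
    simp only [le_abs']
    interval_cases k <;> omega

theorem sq_add_sq_ne_two_of_abs_sub_brick_translation_lt_one {x y : ℝ} {k m : ℤ}
    (hx : |x - (5 / 2 * k + 7 * m)| < 1) (hy : |y - k| < 1) : x ^ 2 + y ^ 2 ≠ 2 := by
  have hx_gt : |(5 * k + 14 * m : ℝ)| / 2 - 1 < |x| := by
    have hhalf : |(5 * k + 14 * m : ℝ)| / 2 = |(5 / 2 * k + 7 * m : ℝ)| := by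
      rw [← abs_two, ← abs_div, abs_two]
      ring_nf
    rw [hhalf]
    exact abs_sub_lt_abs_of_abs_sub_lt hx
  have hy_gt : |(k : ℝ)| - 1 < |y| := abs_sub_lt_abs_of_abs_sub_lt hy
  have hcases := brick_translation_eq_zero_or_le_abs k m
  rify at hcases
  rw [← sq_abs x, ← sq_abs y]
  rcases hcases with ⟨hk, hm⟩ | ⟨hk, hkm⟩ | hk | hkm
  · have hx_one : |x| < 1 := by simpa [hk, hm] using hx
    have hy_one : |y| < 1 := by simpa [hk] using hy
    nlinarith [abs_nonneg x, abs_nonneg y]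
  · have hx_one : 1 < |x| := by linarith
    have hy_one : 1 < |y| := by linarith
    nlinarith only [hx_one, hy_one]
  · have hy_two : 2 < |y| := by linarith
    nlinarith only [hy_two, sq_nonneg |x|]
  · have hx_three_halves : 3 / 2 < |x| := by linarith
    nlinarith only [hx_three_halves, sq_nonneg |y|]

theorem norm_sub_ne_sqrt_two_of_brickColor_eq {p q : EuclideanSpace ℝ (Fin 2)}
    (h : brickColor (5 / 2) 7 p = brickColor (5 / 2) 7 q) : ‖p - q‖ ≠ √2 := by
  obtain ⟨k, m, hx, hy⟩ := exists_abs_sub_lt_one_of_brickColor_eq h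
  intro hnorm
  refine sq_add_sq_ne_two_of_abs_sub_brick_translation_lt_one hx hy ?_
  simpa [hnorm, Fin.sum_univ_two] using (EuclideanSpace.real_norm_sq_eq (p - q)).symm

theorem plane_seven_coloring :
    ∃ f : EuclideanSpace ℝ (Fin 2) → Fin 7,
      ∀ x y : EuclideanSpace ℝ (Fin 2), ‖x - y‖ = 1 → f x ≠ f y := by
  refine ⟨fun p ↦ brickColor (5 / 2) 7 (√2 • p), fun x y hxy hcolor ↦ ?_⟩
  apply norm_sub_ne_sqrt_two_of_brickColor_eq hcolor
  rw [← smul_sub, norm_smul, hxy, mul_one, Real.norm_of_nonneg (Real.sqrt_nonneg 2)]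
end

section
/- There exists a function f : ℝ² → Fin 7 such that for all points x, y ∈ ℝ², if 1 ≤ ‖x − y‖ ≤ √7 / 2 then f(x) ≠ f(y). Equivalently, for every ε with 0 ≤ ε ≤ √7/2 − 1, seven colors suffice to color the plane so that no two points whose distance lies in the interval [1, 1 + ε] receive the same color. -/
/-!
Tile the plane by half-open regular hexagons of diameter `1`. Their centres form a triangular
lattice; colour each hexagon by the class of its centre modulo a sublattice of index `7`, invariant
under rotation by 60 degrees. Points of one hexagon are at distance less than `1`, and the six
shortest nonzero vectors of the sublattice are long enough to separate distinct hexagons of the same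
colour by more than `√7 / 2`.

In suitable oblique coordinates, with lengths doubled, squared length is the binary form
`p ^ 2 - p * q + q ^ 2`, rotation by 60 degrees is `(p, q) ↦ (q, q - p)`, and the hexagons
centred at the origin are `max |p| |q| |q - p| ≤ r`.
-/

open Set

section HexForm

variable {R : Type*} [CommRing R]

/-- The norm form of the triangular lattice, that is, squared length in coordinates with respect to
two unit vectors at an angle of 120 degrees. -/
def hexForm (u : R × R) : R := u.1 ^ 2 - u.1 * u.2 + u.2 ^ 2

/-- Rotation by 60 degrees in the coordinates of `hexForm`. -/
def hexRotate (u : R × R) : R × R := (u.2, u.2 - u.1)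

@[simp]
lemma hexForm_hexRotate (u : R × R) : hexForm (hexRotate u) = hexForm u := by
  simp only [hexForm, hexRotate]
  ring

lemma hexRotate_sub (u v : R × R) : hexRotate (u - v) = hexRotate u - hexRotate v := by
  ext
  · rfl
  · simp only [hexRotate, Prod.fst_sub, Prod.snd_sub]
    ring

lemma map_hexRotate {S : Type*} [CommRing S] (f : R →+* S) (u : R × R) :
    Prod.map f f (hexRotate u) = hexRotate (Prod.map f f u) := by
  simp [hexRotate]

variable [LinearOrder R] [IsStrictOrderedRing R]

lemma three_mul_sq_fst_le_hexForm (u : R × R) : 3 * u.1 ^ 2 ≤ 4 * hexForm u := by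
  unfold hexForm
  linarith [sq_nonneg (u.1 - 2 * u.2)]

lemma hexForm_lt_hexForm {u v : R × R} (h₁ : u.1 < v.1) (h₂ : u.2 < v.2)
    (h₁₂ : u.1 ≤ 2 * u.2) (h₂₁ : u.2 ≤ 2 * u.1) : hexForm u < hexForm v := by
  have expand : hexForm v - hexForm u = (v.1 - u.1 - (v.2 - u.2)) ^ 2
      + (v.1 - u.1) * (v.2 - u.2) + (v.1 - u.1) * (2 * u.1 - u.2)
      + (v.2 - u.2) * (2 * u.2 - u.1) := by
    unfold hexForm
    ring
  have := sub_pos.2 h₁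
  have := sub_pos.2 h₂
  have := sub_nonneg.2 h₁₂
  have := sub_nonneg.2 h₂₁
  rw [← sub_pos, expand]
  positivity

end HexForm

section Hexagon

variable {R : Type*} [CommRing R] [LinearOrder R]

/-- The open regular hexagon of circumradius `r` about the origin, in the coordinates of
`hexForm`. -/
def openHexagon (r : R) : Set (R × R) := {u | |u.1| < r ∧ |u.2| < r ∧ |u.2 - u.1| < r}

/-- The tile about the origin: a regular hexagon with three of its sides removed, so that
its translates can partition the plane. -/
def hexTile : Set (R × R) :=
  {u | u.1 ∈ Ico (-1) 1 ∧ u.2 ∈ Ico (-1) 1 ∧ u.2 - u.1 ∈ Ico (-1) 1}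

lemma hexRotate_mem_openHexagon {r : R} {u : R × R} (hu : u ∈ openHexagon r) :
    hexRotate u ∈ openHexagon r := by
  obtain ⟨h₁, h₂, h₁₂⟩ := hu
  exact ⟨h₂, h₁₂, by simpa [hexRotate] using h₁⟩

lemma sub_mem_openHexagon_add [IsOrderedAddMonoid R] {r s : R} {u v : R × R}
    (hu : u ∈ openHexagon r) (hv : v ∈ openHexagon s) : u - v ∈ openHexagon (r + s) := by
  have abs_sub_lt {a b : R} (ha : |a| < r) (hb : |b| < s) : |a - b| < r + s :=
    (abs_sub a b).trans_lt (add_lt_add ha hb)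
  refine ⟨abs_sub_lt hu.1 hv.1, abs_sub_lt hu.2.1 hv.2.1, ?_⟩
  simpa only [Prod.fst_sub, Prod.snd_sub, sub_sub_sub_comm] using abs_sub_lt hu.2.2 hv.2.2

variable [IsStrictOrderedRing R]

lemma map_intCast_mem_openHexagon {r : ℤ} {c : ℤ × ℤ} :
    Prod.map (↑) (↑) c ∈ openHexagon (r : R) ↔ c ∈ openHexagon r := by
  simp only [openHexagon, mem_ofPred_eq, Prod.map_fst, Prod.map_snd]
  norm_cast

lemma sub_mem_openHexagon_two {u v : R × R} (hu : u ∈ hexTile) (hv : v ∈ hexTile) :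
    u - v ∈ openHexagon 2 := by
  have abs_sub_lt {a b : R} (ha : a ∈ Ico (-1) 1) (hb : b ∈ Ico (-1) 1) : |a - b| < 2 :=
    abs_lt.2 ⟨by linarith [ha.1, hb.2], by linarith [ha.2, hb.1]⟩
  refine ⟨abs_sub_lt hu.1 hv.1, abs_sub_lt hu.2.1 hv.2.1, ?_⟩
  simpa only [Prod.fst_sub, Prod.snd_sub, sub_sub_sub_comm] using abs_sub_lt hu.2.2 hv.2.2

lemma hexForm_lt_sq {r : R} {u : R × R} (hu : u ∈ openHexagon r) : hexForm u < r ^ 2 := by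
  obtain ⟨p, q⟩ := u
  obtain ⟨hp, hq, hpq⟩ := hu
  have sq_lt {a : R} (ha : |a| < r) : a ^ 2 < r ^ 2 := sq_lt_sq.2 (ha.trans_le (le_abs_self r))
  -- The form is `(q - p)² + p q = p² + q (q - p) = q² + p (p - q)`,
  -- and the three products cannot all be positive.
  have product_nonpos : p * q ≤ 0 ∨ q * (q - p) ≤ 0 ∨ p * (p - q) ≤ 0 := by
    by_contra! h
    have : 0 < p * q * (q * (q - p)) * (p * (p - q)) := mul_pos (mul_pos h.1 h.2.1) h.2.2
    linarith [sq_nonneg (p * q * (q - p))]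
  unfold hexForm
  rcases product_nonpos with h | h | h
  · linarith [sq_lt hpq]
  · linarith [sq_lt hp]
  · linarith [sq_lt hq]

lemma mem_openHexagon_of_hexForm_lt {r : R} (hr : 0 ≤ r) {u : R × R}
    (hu : 4 * hexForm u < 3 * r ^ 2) : u ∈ openHexagon r := by
  have abs_fst_lt (v : R × R) (hv : hexForm v = hexForm u) : |v.1| < r := by
    refine abs_lt_of_sq_lt_sq ?_ hr
    linarith [three_mul_sq_fst_le_hexForm v]
  exact ⟨abs_fst_lt u rfl, abs_fst_lt (hexRotate u) (by simp),
    abs_fst_lt (hexRotate (hexRotate u)) (by simp)⟩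

-- The lines `p ∈ ℤ`, `q ∈ ℤ`, `q - p ∈ ℤ` cut the plane into triangles, and the three vertices
-- `(p, q)` of each triangle have distinct residues `p + q` modulo `3`.
lemma exists_sub_mem_hexTile [FloorRing R] (u : R × R) :
    ∃ c : ℤ × ℤ, 3 ∣ c.1 + c.2 ∧ u - Prod.map (↑) (↑) c ∈ hexTile := by
  obtain ⟨p, q⟩ := u
  have hp := Int.floor_le p
  have hp' := Int.lt_floor_add_one p
  have hq := Int.floor_le q
  have hq' := Int.lt_floor_add_one q
  generalize ⌊p⌋ = i at hp hp'
  generalize ⌊q⌋ = j at hq hq'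
  have mem_hexTile {a b : ℤ} (h₁ : p - a ∈ Ico (-1) 1) (h₂ : q - b ∈ Ico (-1) 1)
      (h₁₂ : q - b - (p - a) ∈ Ico (-1) 1) :
      (p, q) - Prod.map (↑) (↑) (a, b) ∈ hexTile := ⟨h₁, h₂, h₁₂⟩
  obtain h | h | h : 3 ∣ i + j ∨ 3 ∣ (i + 1) + (j + 1) ∨ 3 ∣ i + j + 1 := by omega
  · exact ⟨(i, j), h, by apply mem_hexTile <;> constructor <;> linarith⟩
  · exact ⟨(i + 1, j + 1), h, by apply mem_hexTile <;> constructor <;> push_cast <;> linarith⟩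
  · rcases le_or_gt (p - i) (q - j) with hpq | hpq
    · exact ⟨(i, j + 1), by omega, by apply mem_hexTile <;> constructor <;> push_cast <;> linarith⟩
    · exact ⟨(i + 1, j), by omega, by apply mem_hexTile <;> constructor <;> push_cast <;> linarith⟩

end Hexagon

section Coloring

-- Tile centres `(a, b)` satisfy `3 ∣ a + b`; among them, the sublattice of index `7` is cut out by
-- `7 ∣ a + 4 * b`, so that altogether it is `21 ∣ a + 4 * b`.
lemma exists_iterate_hexRotate_eq {c : ℤ × ℤ} (hc : 21 ∣ c.1 + 4 * c.2) (hc₀ : c ≠ 0)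
    (hmem : c ∈ openHexagon 6) : ∃ k : ℕ, hexRotate^[k] c = (5, 4) := by
  obtain ⟨a, b⟩ := c
  obtain ⟨ha, hb, hab⟩ := hmem
  simp only [abs_lt] at ha hb hab
  have key : ∀ a ∈ Finset.Ioo (-6 : ℤ) 6, ∀ b ∈ Finset.Ioo (-6 : ℤ) 6,
      b - a ∈ Finset.Ioo (-6 : ℤ) 6 → 21 ∣ a + 4 * b → (a, b) ≠ 0 →
        ∃ k ∈ Finset.range 6, hexRotate^[k] (a, b) = (5, 4) := by
    decide
  obtain ⟨k, -, hk⟩ :=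
    key a (Finset.mem_Ioo.2 ha) b (Finset.mem_Ioo.2 hb) (Finset.mem_Ioo.2 hab) hc hc₀
  exact ⟨k, hk⟩

variable {R : Type*} [CommRing R] [LinearOrder R] [IsStrictOrderedRing R]

lemma seven_lt_hexForm_of_iterate_hexRotate_eq {k : ℕ} {c : ℤ × ℤ} {u : R × R}
    (hk : hexRotate^[k] c = (5, 4)) (hu : u - Prod.map (↑) (↑) c ∈ openHexagon 2) :
    7 < hexForm u := by
  induction k generalizing c u with
  | zero =>
    obtain rfl : c = (5, 4) := hk
    obtain ⟨h₁, h₂, -⟩ := hu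
    -- `(3, 2) = (5, 4) - (2, 2)` is the vertex of the hexagon about `(5, 4)` nearest to the origin.
    have : hexForm ((3, 2) : R × R) = 7 := by norm_num [hexForm]
    rw [← this]
    simp only [Prod.fst_sub, Prod.snd_sub, Prod.map_fst, Prod.map_snd, Int.cast_ofNat,
      abs_lt] at h₁ h₂
    apply hexForm_lt_hexForm <;> dsimp only <;> linarith
  | succ k ih =>
    rw [← hexForm_hexRotate]
    refine ih hk ?_
    have cast_hexRotate : (Prod.map (↑) (↑) (hexRotate c) : R × R) =
        hexRotate (Prod.map (↑) (↑) c) := map_hexRotate (Int.castRingHom R) c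
    rw [cast_hexRotate, ← hexRotate_sub]
    exact hexRotate_mem_openHexagon hu

lemma seven_lt_hexForm {c : ℤ × ℤ} (hc : 21 ∣ c.1 + 4 * c.2) (hc₀ : c ≠ 0) {u : R × R}
    (hu : u - Prod.map (↑) (↑) c ∈ openHexagon 2) : 7 < hexForm u := by
  by_contra! hle
  have hu' : u ∈ openHexagon 4 := mem_openHexagon_of_hexForm_lt (by norm_num) (by linarith)
  have hc_mem : c ∈ openHexagon 6 := by
    rw [← map_intCast_mem_openHexagon (R := R)]
    convert sub_mem_openHexagon_add hu' hu using 1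
    · norm_num
    · rw [sub_sub_cancel]
  obtain ⟨k, hk⟩ := exists_iterate_hexRotate_eq hc hc₀ hc_mem
  exact hle.not_gt (seven_lt_hexForm_of_iterate_hexRotate_eq hk hu)

lemma exists_coloring_hexForm [FloorRing R] : ∃ f : R × R → ZMod 7, ∀ u v : R × R,
    4 ≤ hexForm (u - v) → hexForm (u - v) ≤ 7 → f u ≠ f v := by
  choose center three_dvd sub_mem using exists_sub_mem_hexTile (R := R)
  refine ⟨fun u ↦ ((center u).1 + 4 * (center u).2 : ℤ), fun u v hlo hhi hcolor ↦ ?_⟩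
  have seven_dvd := (ZMod.intCast_eq_intCast_iff_dvd_sub _ _ 7).1 hcolor.symm
  have dvd : 21 ∣ (center u - center v).1 + 4 * (center u - center v).2 := by
    have hu := three_dvd u
    have hv := three_dvd v
    simp only [Prod.fst_sub, Prod.snd_sub]
    omega
  have mem : u - v - Prod.map (↑) (↑) (center u - center v) ∈ openHexagon 2 := by
    convert sub_mem_openHexagon_two (sub_mem u) (sub_mem v) using 1
    ext <;> simp <;> ring
  by_cases hcenter : center u - center v = 0
  · have cast_zero : (Prod.map (↑) (↑) (0 : ℤ × ℤ) : R × R) = 0 := by ext <;> simp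
    rw [hcenter, cast_zero, sub_zero] at mem
    linarith [hexForm_lt_sq mem]
  · exact hhi.not_gt (seven_lt_hexForm dvd hcenter mem)

end Coloring

/-- Coordinates on the Euclidean plane in which `hexForm` is four times the squared norm. -/
noncomputable def hexCoords : EuclideanSpace ℝ (Fin 2) →ₗ[ℝ] ℝ × ℝ where
  toFun x := (4 / √3 * x 0, 2 / √3 * x 0 + 2 * x 1)
  map_add' x y := by ext <;> simp <;> ring
  map_smul' a x := by ext <;> simp <;> ring

lemma hexForm_hexCoords (x : EuclideanSpace ℝ (Fin 2)) : hexForm (hexCoords x) = 4 * ‖x‖ ^ 2 := by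
  have h : (1 / √3) ^ 2 = 1 / 3 := by norm_num
  simp only [EuclideanSpace.real_norm_sq_eq, Fin.sum_univ_two, hexForm, hexCoords,
    LinearMap.coe_mk, AddHom.coe_mk]
  linear_combination 12 * x 0 ^ 2 * h

theorem plane_seven_coloring_interval :
    ∃ f : EuclideanSpace ℝ (Fin 2) → Fin 7,
      ∀ x y : EuclideanSpace ℝ (Fin 2),
        1 ≤ ‖x - y‖ → ‖x - y‖ ≤ Real.sqrt 7 / 2 → f x ≠ f y := by
  obtain ⟨f, hf⟩ := exists_coloring_hexForm (R := ℝ)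
  refine ⟨fun x ↦ f (hexCoords x), fun x y hlo hhi ↦ hf _ _ ?_ ?_⟩ <;>
    rw [← map_sub, hexForm_hexCoords]
  · linarith [one_le_pow₀ hlo (n := 2)]
  · have := pow_le_pow_left₀ (norm_nonneg _) hhi 2
    rw [div_pow, Real.sq_sqrt (by norm_num)] at this
    linarith
end

section
/- There exists a coloring of the sphere of radius √(1/2) in ℝ³ with 4 colors avoiding unit distance; that is, a function f from {x ∈ ℝ³ : ‖x‖ = √(1/2)} to a 4-element set such that f(x) ≠ f(y) whenever ‖x − y‖ = 1 (obtained by projecting the faces of a regular octahedron inscribed in the sphere). -/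
/-!
Two points of the sphere of radius `√(1/2)` are at unit distance exactly when they are orthogonal,
so it suffices to give equal colors only to vectors with nonzero inner product. Color a vector by
an orthant containing it, identifying opposite orthants: there are `2 ^ n` pairs in `ℝⁿ⁺¹`, and in
`ℝ³` they are the pairs of opposite faces of the octahedron. Up to changing signs, two vectors of
the same color lie in one closed orthant, so their inner product is nonnegative; it could vanish
only on the boundary. The boundary is distributed so that an orthant keeps only vectors that are
strictly positive at its first positive sign, which makes the inner product positive. Such a sign
exists because the representative of each opposite pair is chosen with last sign `+`.
-/

section PlusSet

variable {ι R : Type*} [LinearOrder ι] [Ring R] [LinearOrder R]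

/-- The set of positive signs of the orthant assigned to `x`. A zero coordinate counts as positive
if it comes after a positive one, and as negative otherwise. -/
def plusSet (x : ι → R) : Set ι :=
  {i | 0 ≤ x i ∧ ∃ k ≤ i, 0 < x k}

lemma mem_plusSet_of_pos {x : ι → R} {i : ι} (hi : 0 < x i) : i ∈ plusSet x :=
  ⟨hi.le, i, le_rfl, hi⟩

lemma nonpos_of_notMem_plusSet {x : ι → R} {i : ι} (hi : i ∉ plusSet x) : x i ≤ 0 :=
  not_lt.1 fun h ↦ hi (mem_plusSet_of_pos h)

lemma pos_of_minimal_mem_plusSet {x : ι → R} {j : ι} (hj : Minimal (· ∈ plusSet x) j) :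
    0 < x j := by
  obtain ⟨-, k, hkj, hk⟩ := hj.prop
  obtain rfl : k = j := hj.eq_of_le (mem_plusSet_of_pos hk) hkj
  exact hk

lemma mul_nonneg_of_plusSet_eq [IsStrictOrderedRing R] {x y : ι → R}
    (hxy : plusSet x = plusSet y) (i : ι) : 0 ≤ x i * y i := by
  by_cases hi : i ∈ plusSet x
  · exact mul_nonneg hi.1 (hxy ▸ hi).1
  · exact mul_nonneg_of_nonpos_of_nonpos (nonpos_of_notMem_plusSet hi)
      (nonpos_of_notMem_plusSet (hxy ▸ hi))

lemma dotProduct_pos_of_plusSet_eq [Fintype ι] [IsStrictOrderedRing R] {x y : ι → R}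
    (hx : (plusSet x).Nonempty) (hxy : plusSet x = plusSet y) : 0 < x ⬝ᵥ y := by
  obtain ⟨j, hj⟩ : ∃ j, Minimal (· ∈ plusSet x) j := (plusSet x).toFinite.exists_minimal hx
  have hpos : 0 < x j * y j :=
    mul_pos (pos_of_minimal_mem_plusSet hj) (pos_of_minimal_mem_plusSet (hxy ▸ hj))
  exact Finset.sum_pos' (fun i _ ↦ mul_nonneg_of_plusSet_eq hxy i) ⟨j, Finset.mem_univ j, hpos⟩

lemma top_mem_plusSet_iff [OrderTop ι] {x : ι → R} :
    ⊤ ∈ plusSet x ↔ 0 ≤ x ⊤ ∧ ∃ k, 0 < x k := by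
  simp only [plusSet, Set.mem_ofPred_eq, le_top, true_and]

lemma top_mem_plusSet_or_neg [OrderTop ι] [IsStrictOrderedRing R] {x : ι → R} (hx : x ≠ 0) :
    ⊤ ∈ plusSet x ∨ ⊤ ∈ plusSet (-x) := by
  simp only [top_mem_plusSet_iff, Pi.neg_apply, Left.nonneg_neg_iff, Left.neg_pos_iff]
  rcases lt_trichotomy (x ⊤) 0 with hneg | hzero | hpos
  · exact .inr ⟨hneg.le, ⊤, hneg⟩
  · obtain ⟨k, hk⟩ := Function.ne_iff.1 hx
    exact hk.lt_or_gt.symm.imp (⟨hzero.ge, k, ·⟩) (⟨hzero.le, k, ·⟩)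
  · exact .inl ⟨hpos.le, ⊤, hpos⟩

open Classical in
/-- A choice between `x` and `-x` whose assigned orthant has last sign `+`, provided `x ≠ 0`. -/
noncomputable def orient [OrderTop ι] (x : ι → R) : ι → R :=
  if ⊤ ∈ plusSet x then x else -x

lemma orient_eq_or_neg [OrderTop ι] (x : ι → R) : orient x = x ∨ orient x = -x := by
  classical exact ite_eq_or_eq _ _ _

lemma top_mem_plusSet_orient [OrderTop ι] [IsStrictOrderedRing R] {x : ι → R} (hx : x ≠ 0) :
    ⊤ ∈ plusSet (orient x) := by
  unfold orient
  split_ifs with h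
  · exact h
  · exact (top_mem_plusSet_or_neg hx).resolve_left h

lemma dotProduct_orient_eq_zero [Fintype ι] [OrderTop ι] {x y : ι → R} (hxy : x ⬝ᵥ y = 0) :
    orient x ⬝ᵥ orient y = 0 := by
  rcases orient_eq_or_neg x with hx | hx <;> rcases orient_eq_or_neg y with hy | hy <;>
    simp only [hx, hy, neg_dotProduct, dotProduct_neg, hxy, neg_zero]

end PlusSet

section OrthantColor

variable {R : Type*} [Ring R] [LinearOrder R] {n : ℕ}

/-- The pair of opposite orthants assigned to `x`, encoded by the positive signs other than the last
of the member whose last sign is `+`. -/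
def orthantColor (x : Fin (n + 1) → R) : Set (Fin n) :=
  Fin.castSucc ⁻¹' plusSet (orient x)

lemma plusSet_orient_eq_of_orthantColor_eq [IsStrictOrderedRing R] {x y : Fin (n + 1) → R}
    (hx : x ≠ 0) (hy : y ≠ 0) (hxy : orthantColor x = orthantColor y) :
    plusSet (orient x) = plusSet (orient y) := by
  ext i
  induction i using Fin.lastCases with
  | last => exact iff_of_true (top_mem_plusSet_orient hx) (top_mem_plusSet_orient hy)
  | cast i => exact Set.ext_iff.1 hxy i

theorem orthantColor_ne_of_dotProduct_eq_zero [IsStrictOrderedRing R] {x y : Fin (n + 1) → R}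
    (hx : x ≠ 0) (hy : y ≠ 0) (hxy : x ⬝ᵥ y = 0) : orthantColor x ≠ orthantColor y := fun h ↦
  (dotProduct_pos_of_plusSet_eq ⟨⊤, top_mem_plusSet_orient hx⟩
    (plusSet_orient_eq_of_orthantColor_eq hx hy h)).ne' (dotProduct_orient_eq_zero hxy)

end OrthantColor

lemma inner_eq_zero_of_norm_eq_sqrt_half {E : Type*} [NormedAddCommGroup E] [InnerProductSpace ℝ E]
    {x y : E} (hx : ‖x‖ = Real.sqrt (1 / 2)) (hy : ‖y‖ = Real.sqrt (1 / 2)) (hxy : ‖x - y‖ = 1) :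
    inner ℝ x y = 0 := by
  rw [← norm_sub_sq_eq_norm_sq_add_norm_sq_iff_real_inner_eq_zero, hx, hy, hxy,
    Real.mul_self_sqrt (by norm_num)]
  norm_num

theorem sphere_four_coloring_octahedron_general (n : ℕ) :
    ∃ f : {x : EuclideanSpace ℝ (Fin (n + 1)) // ‖x‖ = Real.sqrt (1 / 2)} → Fin (2 ^ n),
      ∀ x y : {x : EuclideanSpace ℝ (Fin (n + 1)) // ‖x‖ = Real.sqrt (1 / 2)},
        ‖(x : EuclideanSpace ℝ (Fin (n + 1))) - (y : EuclideanSpace ℝ (Fin (n + 1)))‖ = 1 →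
          f x ≠ f y := by
  classical
  let e : Set (Fin n) ≃ Fin (2 ^ n) :=
    Fintype.equivFinOfCardEq (by rw [Fintype.card_set, Fintype.card_fin])
  have ne_zero (x : {x : EuclideanSpace ℝ (Fin (n + 1)) // ‖x‖ = Real.sqrt (1 / 2)}) :
      x.1.ofLp ≠ 0 := by
    rw [Ne, WithLp.ofLp_eq_zero, ← norm_eq_zero, x.2]
    positivity
  refine ⟨fun x ↦ e (orthantColor x.1.ofLp), fun x y hxy ↦ e.injective.ne ?_⟩
  have horth : x.1.ofLp ⬝ᵥ y.1.ofLp = 0 := by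
    rw [← inner_eq_zero_of_norm_eq_sqrt_half y.2 x.2 (norm_sub_rev x.1 y.1 ▸ hxy),
      EuclideanSpace.inner_eq_star_dotProduct, star_trivial]
  exact orthantColor_ne_of_dotProduct_eq_zero (ne_zero x) (ne_zero y) horth

theorem sphere_four_coloring_octahedron :
    ∃ f : {x : EuclideanSpace ℝ (Fin 3) // ‖x‖ = Real.sqrt (1 / 2)} → Fin 4,
      ∀ x y : {x : EuclideanSpace ℝ (Fin 3) // ‖x‖ = Real.sqrt (1 / 2)},
        ‖(x : EuclideanSpace ℝ (Fin 3)) - (y : EuclideanSpace ℝ (Fin 3))‖ = 1 →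
          f x ≠ f y :=
  sphere_four_coloring_octahedron_general 2
end

section
/- For every radius r with 0 < r ≤ √(3/8), there is a coloring of the sphere of radius r in ℝ³ with 6 colors avoiding unit distance; that is, a function f from {x ∈ ℝ³ : ‖x‖ = r} to a 6-element set such that f(x) ≠ f(y) whenever ‖x − y‖ = 1 (obtained by projecting the six faces of an inscribed cube onto the sphere). -/
/-!
Color a point by the face of the cube `[-1, 1]ⁿ` that the ray through it meets. If `x` and `y` have
norm `r` and share the face on one side of the axis `i`, then `xᵢ` and `yᵢ` have the same sign and
absolute value at least `r / √n`, so `‖x + y‖² ≥ (xᵢ + yᵢ)² ≥ 4 r² / n`, and the parallelogram law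
gives `‖x - y‖² ≤ 4 (1 - 1 / n) r²`. For `n = 3` and `r² ≤ 3 / 8` the right-hand side is at most
`1`.

Equality holds only if `x` and `y` point to opposite vertices of that face. It is excluded by
distributing the vertices among the faces so that no face receives two of its opposite vertices:
fix two axes `a ≠ b` and assign a vertex `v` to its face along `a` if `v a * v b > 0`, and to its
face along `b` otherwise. Passing to the opposite vertex of a face along `a` or `b` flips the sign
of `v a * v b`.
-/

section CubeColoring

variable {ι : Type*} {a b i : ι} {x y : EuclideanSpace ℝ ι}

/-- The `i`-th coordinate of `x` is largest in absolute value: the line through `x` meets the faces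
of the cube `[-1, 1]^ι` orthogonal to the `i`-th axis. -/
def IsDominantCoord (x : EuclideanSpace ℝ ι) (i : ι) : Prop :=
  ∀ j, |x j| ≤ |x i|

/-- All coordinates of `x` agree in absolute value: `x` is a multiple of a vertex of the cube
`[-1, 1]^ι`. -/
def IsVertexDirection (x : EuclideanSpace ℝ ι) : Prop :=
  ∀ i j, |x i| = |x j|

theorem IsVertexDirection.isDominantCoord (hx : IsVertexDirection x) (i : ι) :
    IsDominantCoord x i :=
  fun j => (hx j i).le

theorem IsVertexDirection.apply_ne_zero (hx : IsVertexDirection x) (hx0 : x ≠ 0) (i : ι) :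
    x i ≠ 0 := by
  intro hi
  refine hx0 (PiLp.ext fun j => abs_eq_zero.1 ?_)
  rw [hx j i, hi, abs_zero]

theorem exists_isDominantCoord [Finite ι] [Nonempty ι] (x : EuclideanSpace ℝ ι) :
    ∃ i, IsDominantCoord x i :=
  Finite.exists_max fun i => |x i|

section Coloring

variable [Finite ι] [Nonempty ι]

open Classical in
/-- The axis of the cube face assigned to the direction of `x`. The auxiliary axes `a` and `b` only
serve to choose among the faces at a vertex; other ties are broken arbitrarily. -/
noncomputable def cubeAxis (a b : ι) (x : EuclideanSpace ℝ ι) : ι :=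
  if IsVertexDirection x then if 0 < x a * x b then a else b
  else (exists_isDominantCoord x).choose

/-- The cube face assigned to the direction of `x`, encoded by its axis and by the side of the
origin on which it lies. -/
noncomputable def cubeColor (a b : ι) (x : EuclideanSpace ℝ ι) : ι × Bool :=
  (cubeAxis a b x, decide (0 ≤ x (cubeAxis a b x)))

theorem IsVertexDirection.cubeAxis_eq_ite (hx : IsVertexDirection x) :
    cubeAxis a b x = if 0 < x a * x b then a else b :=
  if_pos hx

theorem isDominantCoord_cubeAxis (a b : ι) (x : EuclideanSpace ℝ ι) :
    IsDominantCoord x (cubeAxis a b x) := by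
  by_cases hx : IsVertexDirection x
  · exact hx.isDominantCoord _
  · rw [cubeAxis, if_neg hx]
    exact (exists_isDominantCoord x).choose_spec

theorem apply_cubeAxis_mul_nonneg (h : cubeColor a b x = cubeColor a b y) :
    0 ≤ x (cubeAxis a b x) * y (cubeAxis a b x) := by
  obtain ⟨haxis, hside⟩ := Prod.ext_iff.1 h
  simp only [cubeColor] at haxis hside
  rw [← haxis, decide_eq_decide] at hside
  rcases le_or_gt 0 (x (cubeAxis a b x)) with hx | hx
  · exact mul_nonneg hx (hside.1 hx)
  · exact mul_nonneg_of_nonpos_of_nonpos hx.le (not_le.1 (mt hside.2 hx.not_ge)).le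

theorem IsVertexDirection.cubeAxis_ne_of_opposite (hab : a ≠ b) (hx : IsVertexDirection x)
    (hx0 : x ≠ 0) (hself : y (cubeAxis a b x) = x (cubeAxis a b x))
    (hneg : ∀ j ≠ cubeAxis a b x, y j = -x j) :
    cubeAxis a b y ≠ cubeAxis a b x := by
  have habs : ∀ j, |y j| = |x j| := by
    intro j
    by_cases hj : j = cubeAxis a b x
    · rw [hj, hself]
    · rw [hneg j hj, abs_neg]
  have hy : IsVertexDirection y := fun j k => by rw [habs, habs, hx j k]
  have hprod : y a * y b = -(x a * x b) := by
    by_cases hpos : 0 < x a * x b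
    · rw [hx.cubeAxis_eq_ite, if_pos hpos] at hself hneg
      rw [hself, hneg b hab.symm, mul_neg]
    · rw [hx.cubeAxis_eq_ite, if_neg hpos] at hself hneg
      rw [hself, hneg a hab, neg_mul]
  have hne : x a * x b ≠ 0 := mul_ne_zero (hx.apply_ne_zero hx0 a) (hx.apply_ne_zero hx0 b)
  rw [hy.cubeAxis_eq_ite, hx.cubeAxis_eq_ite, hprod]
  rcases hne.lt_or_gt with hlt | hgt
  · rwa [if_pos (neg_pos.2 hlt), if_neg hlt.not_gt]
  · rw [if_neg (neg_neg_of_pos hgt).not_gt, if_pos hgt]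
    exact hab.symm

end Coloring

variable [Fintype ι]

theorem IsDominantCoord.norm_sq_le (hx : IsDominantCoord x i) :
    ‖x‖ ^ 2 ≤ Fintype.card ι * x i ^ 2 := by
  rw [EuclideanSpace.real_norm_sq_eq, ← nsmul_eq_mul]
  exact Finset.sum_le_card_nsmul _ _ _ fun j _ => sq_le_sq.2 (hx j)

theorem IsDominantCoord.isVertexDirection (hx : IsDominantCoord x i)
    (h : Fintype.card ι * x i ^ 2 ≤ ‖x‖ ^ 2) : IsVertexDirection x := by
  have hsum : ∑ j, x j ^ 2 = ∑ _j : ι, x i ^ 2 := by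
    rw [← EuclideanSpace.real_norm_sq_eq, hx.norm_sq_le.antisymm h, Finset.sum_const,
      nsmul_eq_mul, Finset.card_univ]
  have habs : ∀ j, |x j| = |x i| := fun j =>
    sq_eq_sq_iff_abs_eq_abs _ _ |>.1 <|
      (Finset.sum_eq_sum_iff_of_le fun j _ => sq_le_sq.2 (hx j)).1 hsum j (Finset.mem_univ j)
  exact fun j k => (habs j).trans (habs k).symm

theorem sq_apply_le_norm_sq (x : EuclideanSpace ℝ ι) (i : ι) : x i ^ 2 ≤ ‖x‖ ^ 2 := by
  simpa only [Real.norm_eq_abs, sq_abs] using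
    pow_le_pow_left₀ (norm_nonneg _) (PiLp.norm_apply_le x i) 2

theorem apply_eq_zero_of_norm_sq_le_sq_apply (h : ‖x‖ ^ 2 ≤ x i ^ 2) {j : ι} (hj : j ≠ i) :
    x j = 0 := by
  classical
  have hpair : x i ^ 2 + x j ^ 2 ≤ ‖x‖ ^ 2 := by
    rw [EuclideanSpace.real_norm_sq_eq, ← Finset.sum_pair (f := fun k => x k ^ 2) hj.symm]
    exact Finset.sum_le_univ_sum_of_nonneg fun k => sq_nonneg _
  exact pow_eq_zero_iff two_ne_zero |>.1 (le_antisymm (by linarith) (sq_nonneg _))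

theorem IsDominantCoord.norm_sq_le_card_mul_mul (hx : IsDominantCoord x i)
    (hy : IsDominantCoord y i) (hnorm : ‖x‖ = ‖y‖) (hsign : 0 ≤ x i * y i) :
    ‖x‖ ^ 2 ≤ Fintype.card ι * (x i * y i) := by
  refine le_of_sq_le_sq ?_ (by positivity)
  calc (‖x‖ ^ 2) ^ 2 = ‖x‖ ^ 2 * ‖y‖ ^ 2 := by rw [← hnorm, sq (‖x‖ ^ 2)]
    _ ≤ (Fintype.card ι * x i ^ 2) * (Fintype.card ι * y i ^ 2) :=
      mul_le_mul hx.norm_sq_le hy.norm_sq_le (by positivity) (by positivity)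
    _ = (Fintype.card ι * (x i * y i)) ^ 2 := by ring

theorem IsDominantCoord.four_mul_norm_sq_le (hx : IsDominantCoord x i)
    (hy : IsDominantCoord y i) (hnorm : ‖x‖ = ‖y‖) (hsign : 0 ≤ x i * y i) :
    4 * ‖x‖ ^ 2 ≤ Fintype.card ι * (x i + y i) ^ 2 := by
  have hy' : ‖x‖ ^ 2 ≤ Fintype.card ι * y i ^ 2 := hnorm ▸ hy.norm_sq_le
  linarith [hx.norm_sq_le, hx.norm_sq_le_card_mul_mul hy hnorm hsign]

theorem IsDominantCoord.opposite_vertices_of_card_mul_norm_add_sq_le (hx : IsDominantCoord x i)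
    (hy : IsDominantCoord y i) (hnorm : ‖x‖ = ‖y‖) (hsign : 0 ≤ x i * y i)
    (h : Fintype.card ι * ‖x + y‖ ^ 2 ≤ 4 * ‖x‖ ^ 2) :
    IsVertexDirection x ∧ y i = x i ∧ ∀ j ≠ i, y j = -x j := by
  have : Nonempty ι := ⟨i⟩
  have hcard : (0 : ℝ) < Fintype.card ι := by exact_mod_cast Fintype.card_pos
  have hy' : ‖x‖ ^ 2 ≤ Fintype.card ι * y i ^ 2 := hnorm ▸ hy.norm_sq_le
  have hmul := hx.norm_sq_le_card_mul_mul hy hnorm hsign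
  have hcoord : Fintype.card ι * (x i + y i) ^ 2 ≤ 4 * ‖x‖ ^ 2 :=
    (mul_le_mul_of_nonneg_left (sq_apply_le_norm_sq (x + y) i) hcard.le).trans h
  refine ⟨hx.isVertexDirection (by linarith), ?_, fun j hj => ?_⟩
  · have hdiff : Fintype.card ι * (y i - x i) ^ 2 ≤ 0 := by linarith
    exact sub_eq_zero.1 <| pow_eq_zero_iff two_ne_zero |>.1 <|
      (nonpos_of_mul_nonpos_right hdiff hcard).antisymm (sq_nonneg _)
  · have hsum : ‖x + y‖ ^ 2 ≤ (x + y) i ^ 2 :=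
      le_of_mul_le_mul_left (h.trans (hx.four_mul_norm_sq_le hy hnorm hsign)) hcard
    exact eq_neg_of_add_eq_zero_right (apply_eq_zero_of_norm_sq_le_sq_apply hsum hj)

theorem four_mul_norm_sq_lt_of_cubeColor_eq [Nonempty ι] (hab : a ≠ b) (hx0 : x ≠ 0)
    (hnorm : ‖x‖ = ‖y‖) (h : cubeColor a b x = cubeColor a b y) :
    4 * ‖x‖ ^ 2 < Fintype.card ι * ‖x + y‖ ^ 2 := by
  have haxis : cubeAxis a b x = cubeAxis a b y := congrArg Prod.fst h
  have hx := isDominantCoord_cubeAxis a b x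
  have hy : IsDominantCoord y (cubeAxis a b x) := haxis ▸ isDominantCoord_cubeAxis a b y
  by_contra! hle
  obtain ⟨hvertex, hself, hneg⟩ := hx.opposite_vertices_of_card_mul_norm_add_sq_le hy hnorm
    (apply_cubeAxis_mul_nonneg h) hle
  exact hvertex.cubeAxis_ne_of_opposite hab hx0 hself hneg haxis.symm

theorem card_mul_norm_sub_sq_lt_of_cubeColor_eq [Nonempty ι] (hab : a ≠ b) (hx0 : x ≠ 0)
    (hnorm : ‖x‖ = ‖y‖) (h : cubeColor a b x = cubeColor a b y) :
    Fintype.card ι * ‖x - y‖ ^ 2 < 4 * (Fintype.card ι - 1) * ‖x‖ ^ 2 := by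
  have hsub : ‖x - y‖ ^ 2 = 4 * ‖x‖ ^ 2 - ‖x + y‖ ^ 2 := by
    have hpar := parallelogram_law_with_norm ℝ x y
    rw [← hnorm] at hpar
    linarith
  rw [hsub]
  linarith [four_mul_norm_sq_lt_of_cubeColor_eq hab hx0 hnorm h]

end CubeColoring

theorem sphere_six_coloring_cube_general {ι : Type*} [Fintype ι] [Nontrivial ι] {r : ℝ}
    (hr : r ^ 2 ≤ Fintype.card ι / (4 * (Fintype.card ι - 1))) :
    ∃ f : {x : EuclideanSpace ℝ ι // ‖x‖ = r} → Fin (2 * Fintype.card ι),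
      ∀ x y : {x : EuclideanSpace ℝ ι // ‖x‖ = r},
        ‖(x : EuclideanSpace ℝ ι) - (y : EuclideanSpace ℝ ι)‖ = 1 → f x ≠ f y := by
  obtain ⟨a, b, hab⟩ := exists_pair_ne ι
  let e : ι × Bool ≃ Fin (2 * Fintype.card ι) :=
    Fintype.equivFinOfCardEq (by rw [Fintype.card_prod, Fintype.card_bool, mul_comm])
  refine ⟨fun x => e (cubeColor a b x.1), ?_⟩
  rintro ⟨x, hx⟩ ⟨y, hy⟩ hdist hcolor
  have hnorm : ‖x‖ = ‖y‖ := hx.trans hy.symm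
  have hx0 : x ≠ 0 := by
    rintro rfl
    obtain rfl : y = 0 := norm_eq_zero.1 (hnorm ▸ norm_zero)
    simp at hdist
  have hlt := card_mul_norm_sub_sq_lt_of_cubeColor_eq hab hx0 hnorm (e.injective hcolor)
  have hcard : (1 : ℝ) < Fintype.card ι := by exact_mod_cast Fintype.one_lt_card
  rw [hdist, hx] at hlt
  rw [le_div_iff₀ (by linarith)] at hr
  linarith

theorem sphere_six_coloring_cube :
    ∀ r : ℝ, 0 < r → r ≤ Real.sqrt (3 / 8) →
      ∃ f : {x : EuclideanSpace ℝ (Fin 3) // ‖x‖ = r} → Fin 6,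
        ∀ x y : {x : EuclideanSpace ℝ (Fin 3) // ‖x‖ = r},
          ‖(x : EuclideanSpace ℝ (Fin 3)) - (y : EuclideanSpace ℝ (Fin 3))‖ = 1 →
            f x ≠ f y := by
  intro r hr hr'
  have hsq : r ^ 2 ≤ 3 / 8 := (Real.le_sqrt hr.le (by norm_num)).1 hr'
  exact sphere_six_coloring_cube_general (ι := Fin 3) (by norm_num [hsq])
end

section
/- For every radius r with √(3/8) ≤ r ≤ √3/2, there is a coloring of the sphere of radius r in ℝ³ with 6 colors avoiding unit distance; that is, a function f from {x ∈ ℝ³ : ‖x‖ = r} to a 6-element set such that f(x) ≠ f(y) whenever ‖x − y‖ = 1 (obtained by projecting a regular dodecahedron onto the sphere and using antipodal pairs of faces as color classes). -/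
/-!
Project a regular dodecahedron centered at the origin onto the sphere and color by pairs of
antipodal faces. The vertices of a face have length `√3` and pairwise inner products `3`, `√5` or
`1`, the last for non-adjacent vertices. Expanding in the vertices, `‖x‖ * ‖y‖ ≤ 3 * ⟪x, y⟫` for
`x` and `y` in the cone over one face, with equality only if `x` and `y` lie on the rays of two
non-adjacent vertices. Points of the sphere of radius `r` at distance `1` have inner product
`r ^ 2 - 1 / 2`, and `√(3 / 8) ≤ r ≤ √3 / 2` is exactly the condition
`3 * |r ^ 2 - 1 / 2| ≤ r ^ 2`. So two such points never share a color, provided that the vertices,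
each of which lies on three faces, are distributed so that no face keeps two non-adjacent ones.
-/

open Real
open scoped goldenRatio RealInnerProductSpace

section ConicalHull

variable {E : Type*} [NormedAddCommGroup E] [InnerProductSpace ℝ E] {S : Set E} {w x y z : E}
  {κ : ℝ}

lemma inner_nonneg_of_mem_hull (hS : ∀ v ∈ S, 0 ≤ ⟪v, w⟫) (hx : x ∈ PointedCone.hull ℝ S) :
    0 ≤ ⟪x, w⟫ := by
  have hw : w ∈ PointedCone.dual (innerₗ E) (PointedCone.hull ℝ S : Set E) := by
    rw [PointedCone.dual_hull]
    exact hS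
  exact hw hx

lemma inner_pos_of_mem_hull (hS : ∀ v ∈ S, 0 < ⟪v, w⟫) (hx : x ∈ PointedCone.hull ℝ S)
    (hx0 : x ≠ 0) : 0 < ⟪x, w⟫ := by
  suffices x = 0 ∨ 0 < ⟪x, w⟫ from this.resolve_left hx0
  clear hx0
  induction hx using Submodule.span_induction with
  | mem v hv => exact .inr (hS v hv)
  | zero => exact .inl rfl
  | add x y _ _ hx hy =>
    rcases hx with rfl | hx
    · simpa only [zero_add] using hy
    rcases hy with rfl | hy
    · simpa only [add_zero] using Or.inr hx
    · exact .inr (by rw [inner_add_left]; exact add_pos hx hy)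
  | smul a x _ hx =>
    rcases hx with rfl | hx
    · exact .inl (smul_zero a)
    rcases a.2.eq_or_lt with ha | ha
    · exact .inl (by rw [show a = 0 from Subtype.ext ha.symm, zero_smul])
    · exact .inr ((real_inner_smul_left x w a).symm ▸ mul_pos ha hx)

lemma inner_lt_norm_mul_norm_of_not_sameRay (h : ¬SameRay ℝ x y) : ⟪x, y⟫ < ‖x‖ * ‖y‖ :=
  inner_lt_norm_mul_iff_real.2 fun hxy => h (sameRay_iff_norm_smul_eq.2 hxy.symm)

-- `‖x‖ • z - (κ * ‖z‖) • x` is a normal at `x` of the cone `{x | κ * (‖x‖ * ‖z‖) ≤ ⟪x, z⟫}`, up to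
-- a positive factor when `x` lies on its boundary; pairing with it linearizes the cone inequality.
lemma inner_norm_smul_sub_mul_norm_smul (κ : ℝ) (v x z : E) :
    ⟪v, ‖x‖ • z - (κ * ‖z‖) • x⟫ =
      ‖x‖ * (⟪v, z⟫ - κ * (‖v‖ * ‖z‖)) + κ * ‖z‖ * (‖v‖ * ‖x‖ - ⟪v, x⟫) := by
  rw [inner_sub_right, real_inner_smul_right, real_inner_smul_right]
  ring

lemma inner_self_norm_smul_sub_mul_norm_smul (κ : ℝ) (x z : E) :
    ⟪x, ‖x‖ • z - (κ * ‖z‖) • x⟫ = ‖x‖ * (⟪x, z⟫ - κ * (‖x‖ * ‖z‖)) := by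
  rw [inner_norm_smul_sub_mul_norm_smul, real_inner_self_eq_norm_mul_norm, sub_self, mul_zero,
    add_zero]

lemma mul_norm_mul_norm_le_inner_of_mem_hull (hκ : 0 ≤ κ)
    (hS : ∀ v ∈ S, κ * (‖v‖ * ‖z‖) ≤ ⟪v, z⟫) (hx : x ∈ PointedCone.hull ℝ S) :
    κ * (‖x‖ * ‖z‖) ≤ ⟪x, z⟫ := by
  rcases eq_or_ne x 0 with rfl | hx0
  · simp only [norm_zero, zero_mul, mul_zero, inner_zero_left, le_refl]
  have hw : 0 ≤ ⟪x, ‖x‖ • z - (κ * ‖z‖) • x⟫ := by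
    refine inner_nonneg_of_mem_hull (fun v hv => ?_) hx
    rw [inner_norm_smul_sub_mul_norm_smul]
    have hz := sub_nonneg.2 (hS v hv)
    have hxv := sub_nonneg.2 (real_inner_le_norm v x)
    positivity
  rw [inner_self_norm_smul_sub_mul_norm_smul] at hw
  exact sub_nonneg.1 (nonneg_of_mul_nonneg_right hw (norm_pos_iff.2 hx0))

lemma mul_norm_mul_norm_lt_inner_of_mem_hull (hκ : 0 < κ)
    (hS : ∀ v ∈ S, κ * (‖v‖ * ‖z‖) ≤ ⟪v, z⟫)
    (hS' : ∀ v ∈ S, SameRay ℝ x v → κ * (‖v‖ * ‖z‖) < ⟪v, z⟫)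
    (hx : x ∈ PointedCone.hull ℝ S) (hx0 : x ≠ 0) (hz0 : z ≠ 0) :
    κ * (‖x‖ * ‖z‖) < ⟪x, z⟫ := by
  have hw : 0 < ⟪x, ‖x‖ • z - (κ * ‖z‖) • x⟫ := by
    refine inner_pos_of_mem_hull (fun v hv => ?_) hx hx0
    rw [inner_norm_smul_sub_mul_norm_smul]
    by_cases hxv : SameRay ℝ x v
    · have hz := sub_pos.2 (hS' v hv hxv)
      have hvx := sub_nonneg.2 (real_inner_le_norm v x)
      positivity
    · have hz := sub_nonneg.2 (hS v hv)
      have hvx := sub_pos.2 (inner_lt_norm_mul_norm_of_not_sameRay (mt SameRay.symm hxv))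
      positivity
  rw [inner_self_norm_smul_sub_mul_norm_smul] at hw
  exact sub_pos.1 (pos_of_mul_pos_right hw (norm_nonneg x))

lemma mul_norm_mul_norm_lt_inner_of_mem_hull_of_mem_hull (hκ : 0 < κ)
    (hS : ∀ u ∈ S, ∀ v ∈ S, κ * (‖u‖ * ‖v‖) ≤ ⟪u, v⟫)
    (hS' : ∀ u ∈ S, ∀ v ∈ S, SameRay ℝ x u → SameRay ℝ y v → κ * (‖u‖ * ‖v‖) < ⟪u, v⟫)
    (hx : x ∈ PointedCone.hull ℝ S) (hy : y ∈ PointedCone.hull ℝ S)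
    (hx0 : x ≠ 0) (hy0 : y ≠ 0) : κ * (‖x‖ * ‖y‖) < ⟪x, y⟫ := by
  have le_inner_x : ∀ v ∈ S, κ * (‖v‖ * ‖x‖) ≤ ⟪v, x⟫ := fun v hv => by
    rw [mul_comm ‖v‖, real_inner_comm]
    exact mul_norm_mul_norm_le_inner_of_mem_hull hκ.le (fun u hu => hS u hu v hv) hx
  have lt_inner_x : ∀ v ∈ S, SameRay ℝ y v → κ * (‖v‖ * ‖x‖) < ⟪v, x⟫ := fun v hv hyv => by
    have hv0 : v ≠ 0 := by
      rintro rfl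
      simpa using hS' 0 hv 0 hv (SameRay.zero_right x) hyv
    rw [mul_comm ‖v‖, real_inner_comm]
    exact mul_norm_mul_norm_lt_inner_of_mem_hull hκ (fun u hu => hS u hu v hv)
      (fun u hu hxu => hS' u hu v hv hxu hyv) hx hx0 hv0
  rw [mul_comm ‖x‖, real_inner_comm]
  exact mul_norm_mul_norm_lt_inner_of_mem_hull hκ le_inner_x lt_inner_x hy hy0 hx0

lemma abs_inner_le_of_norm_sub_eq_one {r : ℝ} (hr : √(3 / 8) ≤ r) (hr' : r ≤ √3 / 2)
    (hx : ‖x‖ = r) (hy : ‖y‖ = r) (hxy : ‖x - y‖ = 1) :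
    |⟪x, y⟫| ≤ 1 / 3 * (‖x‖ * ‖y‖) := by
  have hr0 : 0 ≤ r := (sqrt_nonneg _).trans hr
  have hlower : 3 / 8 ≤ r ^ 2 := (sqrt_le_left hr0).1 hr
  have hupper : r ^ 2 ≤ 3 / 4 := by
    calc r ^ 2 ≤ (√3 / 2) ^ 2 := by gcongr
      _ = 3 / 4 := by rw [div_pow, sq_sqrt (by norm_num)]; norm_num
  have hinner : ⟪x, y⟫ = r ^ 2 - 1 / 2 := by
    have hpolar := norm_sub_sq_real x y
    rw [hx, hy, hxy] at hpolar
    linarith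
  rw [hinner, hx, hy, abs_le]
  constructor <;> linarith

end ConicalHull

lemma sum_smul_mem_hull_range {ι E : Type*} [Fintype ι] [AddCommGroup E] [Module ℝ E]
    {t : ι → ℝ} (ht : ∀ i, 0 ≤ t i) (v : ι → E) :
    ∑ i, t i • v i ∈ PointedCone.hull ℝ (Set.range v) :=
  sum_mem fun i _ => Submodule.smul_mem _ (⟨t i, ht i⟩ : {c : ℝ // 0 ≤ c})
    (PointedCone.subset_hull (Set.mem_range_self i))

local notation "E³" => EuclideanSpace ℝ (Fin 3)

/-- The vertices, in cyclic order, of the face with outward normal `(0, 1, φ)` of the dodecahedron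
whose vertices are `(±1, ±1, ±1)` and the cyclic shifts of `(0, ±φ, ±(φ - 1))`. This reference face
is carried to all the others by the symmetries of the dodecahedron. -/
noncomputable def faceVertex : Fin 5 → E³ :=
  ![!₂[1, 1, 1], !₂[0, φ, φ - 1], !₂[-1, 1, 1], !₂[1 - φ, 0, φ], !₂[φ - 1, 0, φ]]

lemma inner_faceVertex (i j : Fin 5) :
    ⟪faceVertex i, faceVertex j⟫ =
      if i = j then 3 else if i = j + 1 ∨ j = i + 1 then 2 * φ - 1 else 1 := by
  have hφ := goldenRatio_sq
  have hinner : ⟪faceVertex i, faceVertex j⟫ = faceVertex i 0 * faceVertex j 0 +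
      faceVertex i 1 * faceVertex j 1 + faceVertex i 2 * faceVertex j 2 := by
    simp [PiLp.inner_apply, Fin.sum_univ_three, mul_comm]
  rw [hinner]
  fin_cases i <;> fin_cases j <;> simp [faceVertex] <;> grind

lemma one_le_inner_faceVertex (i j : Fin 5) : 1 ≤ ⟪faceVertex i, faceVertex j⟫ := by
  rw [inner_faceVertex]
  split_ifs <;> linarith [one_lt_goldenRatio]

lemma one_lt_inner_faceVertex {i j : Fin 5} (hi : i = 0 ∨ i = 1) (hj : j = 0 ∨ j = 1) :
    1 < ⟪faceVertex i, faceVertex j⟫ := by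
  have hadj : i = j ∨ i = j + 1 ∨ j = i + 1 := by
    rcases hi with rfl | rfl <;> rcases hj with rfl | rfl <;> decide
  rw [inner_faceVertex]
  split_ifs <;> first | linarith [one_lt_goldenRatio] | tauto

lemma norm_faceVertex (i : Fin 5) : ‖faceVertex i‖ = √3 := by
  rw [norm_eq_sqrt_real_inner, inner_faceVertex, if_pos rfl]

lemma faceVertex_ne_zero (i : Fin 5) : faceVertex i ≠ 0 := by
  rw [← norm_pos_iff, norm_faceVertex]
  positivity

lemma faceVertex_injective : Function.Injective faceVertex := by
  intro i j hij
  by_contra hne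
  have hself : ⟪faceVertex i, faceVertex j⟫ = 3 := by
    rw [← hij, inner_faceVertex, if_pos rfl]
  rw [inner_faceVertex, if_neg hne] at hself
  split_ifs at hself <;> linarith [goldenRatio_lt_two]

lemma mem_hull_range_faceVertex_of_coeff {x : E³} {t₀ t₁ t₂ t₃ t₄ : ℝ} (h₀ : 0 ≤ t₀)
    (h₁ : 0 ≤ t₁) (h₂ : 0 ≤ t₂) (h₃ : 0 ≤ t₃) (h₄ : 0 ≤ t₄)
    (hx₀ : x 0 = t₀ - t₂ + (φ - 1) * (t₄ - t₃)) (hx₁ : x 1 = t₀ + φ * t₁ + t₂)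
    (hx₂ : x 2 = t₀ + (φ - 1) * t₁ + t₂ + φ * (t₃ + t₄)) :
    x ∈ PointedCone.hull ℝ (Set.range faceVertex) := by
  have ht : ∀ i, 0 ≤ ![t₀, t₁, t₂, t₃, t₄] i := by
    simp [Fin.forall_fin_succ, *]
  convert sum_smul_mem_hull_range ht faceVertex
  ext i
  fin_cases i <;> simp [faceVertex, Fin.sum_univ_five] <;> linarith

-- The hypotheses compare the pairing of `x` with the outward normal `(0, 1, φ)` to its pairings
-- with the normals `(0, -1, φ)`, `(±1, φ, 0)` and `(±φ, 0, 1)` of the five neighboring faces.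
lemma mem_hull_range_faceVertex {x : E³} (h₀ : 0 ≤ x 1)
    (h₁ : |x 0| + φ * x 1 ≤ x 1 + φ * x 2) (h₂ : φ * |x 0| + x 2 ≤ x 1 + φ * x 2) :
    x ∈ PointedCone.hull ℝ (Set.range faceVertex) := by
  have hφ := goldenRatio_sq
  have hφ1 : 0 ≤ φ - 1 := sub_nonneg.2 one_lt_goldenRatio.le
  set a := x 0
  set b := x 1
  set c := x 2
  have ha : a ≤ |a| := le_abs_self a
  have hna : -a ≤ |a| := neg_le_abs a
  have hφa : φ * a ≤ φ * |a| := by gcongr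
  have hφna : φ * -a ≤ φ * |a| := by gcongr
  -- The diagonals through `faceVertex 1` cut the face into three triangles, treated in turn.
  by_cases hA : 0 ≤ (φ + 1) * a + (2 - φ) * b - c
  · refine mem_hull_range_faceVertex_of_coeff (t₀ := ((φ + 1) * a + (2 - φ) * b - c) / 2)
      (t₁ := (-φ * a + b + (φ - 1) * c) / 2) (t₄ := (-a - (φ - 1) * b + φ * c) / 2)
      (by linarith) (by linarith) le_rfl le_rfl (by linarith) ?_ ?_ ?_ <;> grind
  by_cases hB : 0 ≤ -(φ + 1) * a + (2 - φ) * b - c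
  · refine mem_hull_range_faceVertex_of_coeff (t₁ := (φ * a + b + (φ - 1) * c) / 2)
      (t₂ := (-(φ + 1) * a + (2 - φ) * b - c) / 2) (t₃ := (a - (φ - 1) * b + φ * c) / 2)
      le_rfl (by linarith) (by linarith) (by linarith) le_rfl ?_ ?_ ?_ <;> grind
  · have ht₃ : 0 ≤ (φ - 1) * ((φ + 1) * a - (2 - φ) * b + c) :=
      mul_nonneg hφ1 (by linarith)
    have ht₄ : 0 ≤ (φ - 1) * (-(φ + 1) * a - (2 - φ) * b + c) :=
      mul_nonneg hφ1 (by linarith)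
    refine mem_hull_range_faceVertex_of_coeff (t₁ := (φ - 1) * b)
      (t₃ := (φ - 1) * (-(φ + 1) * a - (2 - φ) * b + c) / 2)
      (t₄ := (φ - 1) * ((φ + 1) * a - (2 - φ) * b + c) / 2)
      le_rfl (mul_nonneg hφ1 h₀) le_rfl (by linarith) (by linarith) ?_ ?_ ?_ <;> grind

/-- The part of the cone over the reference face that gets the color of that face. Of the rays
through its vertices only two are kept, and these vertices are adjacent. -/
def coloredCone : Set E³ :=
  {x | x ∈ PointedCone.hull ℝ (Set.range faceVertex) ∧
    ∀ k, SameRay ℝ x (faceVertex k) → k = 0 ∨ k = 1}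

lemma ne_zero_of_mem_coloredCone {x : E³} (hx : x ∈ coloredCone) : x ≠ 0 := by
  rintro rfl
  simpa using hx.2 2 (SameRay.zero_left _)

lemma smul_mem_coloredCone {x : E³} {m : ℝ} (hm : 0 < m) (hx : x ∈ coloredCone) :
    m • x ∈ coloredCone :=
  ⟨Submodule.smul_mem _ (⟨m, hm.le⟩ : {c : ℝ // 0 ≤ c}) hx.1, fun k hk =>
    hx.2 k (by simpa only [inv_smul_smul₀ hm.ne'] using hk.pos_smul_left (inv_pos.2 hm))⟩

lemma faceVertex_mem_coloredCone {k : Fin 5} (hk : k = 0 ∨ k = 1) :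
    faceVertex k ∈ coloredCone := by
  refine ⟨PointedCone.subset_hull (Set.mem_range_self k), fun j hkj => ?_⟩
  have hnorm : ‖faceVertex k‖ = ‖faceVertex j‖ := by rw [norm_faceVertex, norm_faceVertex]
  rwa [← faceVertex_injective (hkj.eq_of_norm_eq hnorm)]

lemma norm_mul_norm_lt_inner_of_mem_coloredCone {x y : E³} (hx : x ∈ coloredCone)
    (hy : y ∈ coloredCone) : 1 / 3 * (‖x‖ * ‖y‖) < ⟪x, y⟫ := by
  have hnorm (i j : Fin 5) : 1 / 3 * (‖faceVertex i‖ * ‖faceVertex j‖) = 1 := by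
    rw [norm_faceVertex, norm_faceVertex, mul_self_sqrt (by norm_num)]
    norm_num
  refine mul_norm_mul_norm_lt_inner_of_mem_hull_of_mem_hull (by norm_num) ?_ ?_ hx.1 hy.1
    (ne_zero_of_mem_coloredCone hx) (ne_zero_of_mem_coloredCone hy)
  · rintro _ ⟨i, rfl⟩ _ ⟨j, rfl⟩
    exact (hnorm i j).trans_le (one_le_inner_faceVertex i j)
  · rintro _ ⟨i, rfl⟩ _ ⟨j, rfl⟩ hxi hyj
    exact (hnorm i j).trans_lt (one_lt_inner_faceVertex (hx.2 i hxi) (hy.2 j hyj))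

/-- The cyclic shift `(a, b, c) ↦ (b, c, a)`, a symmetry of the dodecahedron. -/
noncomputable def cycleCoords : E³ ≃ₗᵢ[ℝ] E³ :=
  LinearIsometryEquiv.piLpCongrLeft 2 ℝ ℝ (finRotate 3).symm

/-- The reflection `(a, b, c) ↦ (a, -b, c)`, a symmetry of the dodecahedron. -/
noncomputable def reflectSnd : E³ ≃ₗᵢ[ℝ] E³ :=
  LinearIsometryEquiv.piLpCongrRight 2 ![.refl ℝ ℝ, .neg ℝ, .refl ℝ ℝ]

lemma cycleCoords_apply (x : E³) : cycleCoords x = !₂[x 1, x 2, x 0] := by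
  ext i; fin_cases i <;> rfl

lemma reflectSnd_apply (x : E³) : reflectSnd x = !₂[x 0, -x 1, x 2] := by
  ext i; fin_cases i <;> rfl

lemma cycleCoords_pow_three : cycleCoords ^ 3 = 1 := by
  ext x i; fin_cases i <;> rfl

lemma reflectSnd_reflectSnd (x : E³) : reflectSnd (reflectSnd x) = x := by
  ext i; fin_cases i <;> simp [reflectSnd_apply]

/-- The isometries taking the six pairs of antipodal faces to the pair of the reference face. -/
noncomputable def faceIsometry (i : Fin 3 × Fin 2) : E³ ≃ₗᵢ[ℝ] E³ :=
  reflectSnd ^ (i.2 : ℕ) * cycleCoords ^ (i.1 : ℕ)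

lemma faceIsometry_cycleCoords (k : Fin 3) (s : Fin 2) (x : E³) :
    faceIsometry (k, s) (cycleCoords x) = faceIsometry (k + 1, s) x := by
  have hpow : cycleCoords ^ ((k + 1 : Fin 3) : ℕ) = cycleCoords ^ (k : ℕ) * cycleCoords := by
    rw [Fin.val_add, Fin.val_one, ← pow_eq_pow_mod _ cycleCoords_pow_three, pow_succ]
  rw [faceIsometry, faceIsometry, hpow]
  rfl

/-- The color classes, one for each pair of antipodal faces. A point may lie in several of them. -/
def colorClass (i : Fin 3 × Fin 2) : Set E³ :=
  {x | faceIsometry i x ∈ coloredCone ∨ faceIsometry i (-x) ∈ coloredCone}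

lemma norm_mul_norm_lt_abs_inner_of_mem_colorClass {i : Fin 3 × Fin 2} {x y : E³}
    (hx : x ∈ colorClass i) (hy : y ∈ colorClass i) : 1 / 3 * (‖x‖ * ‖y‖) < |⟪x, y⟫| := by
  rw [lt_abs]
  rcases hx with hx | hx <;> rcases hy with hy | hy <;>
    have h := norm_mul_norm_lt_inner_of_mem_coloredCone hx hy <;>
    simp only [LinearIsometryEquiv.norm_map, LinearIsometryEquiv.inner_map_map, norm_neg,
      inner_neg_left, inner_neg_right, neg_neg] at h <;>
    simp only [h, true_or, or_true]

/-- The union of the color classes, to be shown to consist of all nonzero points. -/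
def coloredSet : Set E³ := ⋃ i, colorClass i

lemma neg_mem_coloredSet {x : E³} : -x ∈ coloredSet ↔ x ∈ coloredSet := by
  simp [coloredSet, colorClass, or_comm]

lemma smul_mem_coloredSet {x : E³} {m : ℝ} (hm : 0 < m) (hx : x ∈ coloredSet) :
    m • x ∈ coloredSet := by
  obtain ⟨i, hi⟩ := Set.mem_iUnion.1 hx
  refine Set.mem_iUnion.2 ⟨i, hi.imp (fun h => ?_) (fun h => ?_)⟩
  · rw [map_smul]
    exact smul_mem_coloredCone hm h
  · rw [← smul_neg, map_smul]
    exact smul_mem_coloredCone hm h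

lemma mem_coloredSet_of_cycleCoords_mem {x : E³} (h : cycleCoords x ∈ coloredSet) :
    x ∈ coloredSet := by
  obtain ⟨⟨k, s⟩, hks⟩ := Set.mem_iUnion.1 h
  refine Set.mem_iUnion.2 ⟨(k + 1, s), hks.imp (fun h => ?_) (fun h => ?_)⟩
  · rwa [← faceIsometry_cycleCoords]
  · rwa [← faceIsometry_cycleCoords, map_neg]

lemma coloredCone_subset_coloredSet : coloredCone ⊆ coloredSet :=
  fun _ hx => Set.mem_iUnion.2 ⟨(0, 0), .inl hx⟩

lemma reflectSnd_mem_coloredSet {x : E³} (hx : x ∈ coloredCone) : reflectSnd x ∈ coloredSet :=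
  Set.mem_iUnion.2 ⟨(0, 1), .inl (by
    change reflectSnd (reflectSnd x) ∈ coloredCone
    rwa [reflectSnd_reflectSnd])⟩

lemma faceVertex_mem_coloredSet (k : Fin 5) :
    faceVertex k ∈ coloredSet ∧ reflectSnd (faceVertex k) ∈ coloredSet := by
  have h₀ := faceVertex_mem_coloredCone (k := 0) (.inl rfl)
  have h₁ := faceVertex_mem_coloredCone (k := 1) (.inr rfl)
  have h₂ : cycleCoords (cycleCoords (faceVertex 2)) = reflectSnd (faceVertex 0) := by
    ext i; fin_cases i <;> simp [faceVertex, cycleCoords_apply, reflectSnd_apply]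
  have h₂' : cycleCoords (reflectSnd (faceVertex 2)) = -reflectSnd (faceVertex 0) := by
    ext i; fin_cases i <;> simp [faceVertex, cycleCoords_apply, reflectSnd_apply]
  have h₃ : cycleCoords (faceVertex 3) = -reflectSnd (faceVertex 1) := by
    ext i; fin_cases i <;> simp [faceVertex, cycleCoords_apply, reflectSnd_apply]
  have h₃' : reflectSnd (faceVertex 3) = faceVertex 3 := by
    ext i; fin_cases i <;> simp [faceVertex, reflectSnd_apply]
  have h₄ : cycleCoords (faceVertex 4) = faceVertex 1 := by
    ext i; fin_cases i <;> simp [faceVertex, cycleCoords_apply]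
  have h₄' : reflectSnd (faceVertex 4) = faceVertex 4 := by
    ext i; fin_cases i <;> simp [faceVertex, reflectSnd_apply]
  have h₃mem : faceVertex 3 ∈ coloredSet := mem_coloredSet_of_cycleCoords_mem
    (h₃ ▸ neg_mem_coloredSet.2 (reflectSnd_mem_coloredSet h₁))
  have h₄mem : faceVertex 4 ∈ coloredSet :=
    mem_coloredSet_of_cycleCoords_mem (h₄ ▸ coloredCone_subset_coloredSet h₁)
  fin_cases k
  · exact ⟨coloredCone_subset_coloredSet h₀, reflectSnd_mem_coloredSet h₀⟩
  · exact ⟨coloredCone_subset_coloredSet h₁, reflectSnd_mem_coloredSet h₁⟩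
  · exact ⟨mem_coloredSet_of_cycleCoords_mem
      (mem_coloredSet_of_cycleCoords_mem (h₂ ▸ reflectSnd_mem_coloredSet h₀)),
      mem_coloredSet_of_cycleCoords_mem
        (h₂' ▸ neg_mem_coloredSet.2 (reflectSnd_mem_coloredSet h₀))⟩
  · exact ⟨h₃mem, h₃'.symm ▸ h₃mem⟩
  · exact ⟨h₄mem, h₄'.symm ▸ h₄mem⟩

lemma mem_coloredSet_of_mem_hull {x : E³} (hx0 : x ≠ 0)
    (hx : x ∈ PointedCone.hull ℝ (Set.range faceVertex)) :
    x ∈ coloredSet ∧ reflectSnd x ∈ coloredSet := by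
  by_cases hcone : x ∈ coloredCone
  · exact ⟨coloredCone_subset_coloredSet hcone, reflectSnd_mem_coloredSet hcone⟩
  obtain ⟨k, hk⟩ : ∃ k, SameRay ℝ x (faceVertex k) := by
    by_contra! h
    exact hcone ⟨hx, fun k hk => (h k hk).elim⟩
  obtain ⟨m, hm, rfl⟩ := hk.exists_pos_right hx0 (faceVertex_ne_zero k)
  obtain ⟨hmem, hmem'⟩ := faceVertex_mem_coloredSet k
  rw [map_smul]
  exact ⟨smul_mem_coloredSet hm hmem, smul_mem_coloredSet hm hmem'⟩

lemma mem_coloredSet_of_le {x : E³} (hx0 : x ≠ 0)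
    (h₁ : |x 0| + φ * |x 1| ≤ |x 1| + φ * |x 2|)
    (h₂ : |x 2| + φ * |x 0| ≤ |x 1| + φ * |x 2|) : x ∈ coloredSet := by
  wlog hx2 : 0 ≤ x 2 generalizing x
  · refine neg_mem_coloredSet.1 (this (neg_ne_zero.2 hx0) ?_ ?_ ?_)
    · simpa only [PiLp.neg_apply, abs_neg] using h₁
    · simpa only [PiLp.neg_apply, abs_neg] using h₂
    · simpa only [PiLp.neg_apply, neg_nonneg] using (not_le.1 hx2).le
  rw [abs_of_nonneg hx2] at h₁ h₂
  rcases le_total 0 (x 1) with hx1 | hx1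
  · rw [abs_of_nonneg hx1] at h₁ h₂
    exact (mem_coloredSet_of_mem_hull hx0
      (mem_hull_range_faceVertex hx1 h₁ (by rwa [add_comm]))).1
  · rw [abs_of_nonpos hx1] at h₁ h₂
    have hmem : reflectSnd x ∈ PointedCone.hull ℝ (Set.range faceVertex) := by
      apply mem_hull_range_faceVertex <;> simp [reflectSnd_apply] <;> linarith
    rw [← reflectSnd_reflectSnd x]
    exact (mem_coloredSet_of_mem_hull (by simpa using hx0) hmem).2

lemma mem_coloredSet {x : E³} (hx0 : x ≠ 0) : x ∈ coloredSet := by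
  have hmax : (|x 0| + φ * |x 1| ≤ |x 1| + φ * |x 2| ∧ |x 2| + φ * |x 0| ≤ |x 1| + φ * |x 2|) ∨
      (|x 1| + φ * |x 2| ≤ |x 2| + φ * |x 0| ∧ |x 0| + φ * |x 1| ≤ |x 2| + φ * |x 0|) ∨
      (|x 2| + φ * |x 0| ≤ |x 0| + φ * |x 1| ∧ |x 1| + φ * |x 2| ≤ |x 0| + φ * |x 1|) := by
    grind
  rcases hmax with h | h | h
  · exact mem_coloredSet_of_le hx0 h.1 h.2
  · have hx0' : cycleCoords x ≠ 0 := by simpa only [ne_eq, map_eq_zero_iff _ cycleCoords.injective]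
    exact mem_coloredSet_of_cycleCoords_mem (mem_coloredSet_of_le hx0' h.1 h.2)
  · have hx0' : cycleCoords (cycleCoords x) ≠ 0 := by
      simpa only [ne_eq, map_eq_zero_iff _ cycleCoords.injective]
    exact mem_coloredSet_of_cycleCoords_mem
      (mem_coloredSet_of_cycleCoords_mem (mem_coloredSet_of_le hx0' h.1 h.2))

theorem sphere_six_coloring_dodecahedron :
    ∀ r : ℝ, Real.sqrt (3 / 8) ≤ r → r ≤ Real.sqrt 3 / 2 →
      ∃ f : {x : EuclideanSpace ℝ (Fin 3) // ‖x‖ = r} → Fin 6,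
        ∀ x y : {x : EuclideanSpace ℝ (Fin 3) // ‖x‖ = r},
          ‖(x : EuclideanSpace ℝ (Fin 3)) - (y : EuclideanSpace ℝ (Fin 3))‖ = 1 →
            f x ≠ f y := by
  intro r hr hr'
  have hr0 : 0 < r := (sqrt_pos.2 (by norm_num)).trans_le hr
  have hne (x : {x : E³ // ‖x‖ = r}) : (x : E³) ≠ 0 := norm_pos_iff.1 (x.2.symm ▸ hr0)
  choose color hcolor using fun x : {x : E³ // ‖x‖ = r} => Set.mem_iUnion.1 (mem_coloredSet (hne x))
  refine ⟨finProdFinEquiv ∘ color, fun x y hxy hfxy => ?_⟩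
  have hsame : color x = color y := finProdFinEquiv.injective hfxy
  exact (norm_mul_norm_lt_abs_inner_of_mem_colorClass (hcolor x) (hsame ▸ hcolor y)).not_ge
    (abs_inner_le_of_norm_sub_eq_one hr hr' x.2 y.2 hxy)
end

section
/- For every radius r with √(1/3) < r ≤ √3/2, there is a coloring of the sphere of radius r in ℝ³ with 6 colors avoiding unit distance; that is, a function f from {x ∈ ℝ³ : ‖x‖ = r} to a 6-element set such that f(x) ≠ f(y) whenever ‖x − y‖ = 1 (using the cube projection for √(1/3) < r ≤ √(3/8) and the dodecahedron projection for √(3/8) ≤ r ≤ √3/2). -/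
/-!
Two points of the sphere of radius `r` at distance `1` make an angle of cosine
`1 - 1 / (2 * r ^ 2)`.

For `r ^ 2 < 3 / 8` this cosine is less than `-1 / 3`, while two vectors in the cone over a face of
a centred cube make an angle of cosine at least `-1 / 3`; the six faces are the six colors.

For `3 / 8 ≤ r ^ 2 ≤ 3 / 4` it lies between `-1 / 3` and `1 / 3`. Two points of one face of a
regular dodecahedron make an angle of cosine at least `1 / 3`, with equality only for two
nonadjacent vertices. So the six pairs of opposite faces are the colors, provided that each line
through a vertex is given to one of its faces so that a face only receives two adjacent vertices.
-/

section

open Real Set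
open scoped goldenRatio RealInnerProductSpace

section CubeFaces

variable {ι : Type*}

/-- The cone over the face of the cube `[-1, 1]^ι` on which the coordinate `i.1` equals the
sign `i.2`. -/
def cubeFaceCone (i : ι × ℤˣ) : Set (EuclideanSpace ℝ ι) :=
  {x | ∀ j, |x j| ≤ (i.2 : ℤ) * x i.1}

theorem exists_mem_cubeFaceCone [Finite ι] [Nonempty ι] (x : EuclideanSpace ℝ ι) :
    ∃ i, x ∈ cubeFaceCone i := by
  obtain ⟨i, hi⟩ := Finite.exists_max fun i => |x i|
  rcases abs_choice (x i) with h | h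
  · exact ⟨(i, 1), fun j => by simpa [h] using hi j⟩
  · exact ⟨(i, -1), fun j => by simpa [h] using hi j⟩

variable [Fintype ι]

theorem norm_sq_le_card_mul_sq_of_mem_cubeFaceCone {i : ι × ℤˣ} {x : EuclideanSpace ℝ ι}
    (hx : x ∈ cubeFaceCone i) : ‖x‖ ^ 2 ≤ Fintype.card ι * ((i.2 : ℤ) * x i.1) ^ 2 := by
  rw [EuclideanSpace.real_norm_sq_eq, ← nsmul_eq_mul]
  exact Finset.univ.sum_le_card_nsmul _ _ fun j _ => sq_le_sq.2 ((hx j).trans (le_abs_self _))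

theorem le_card_mul_inner_of_mem_cubeFaceCone {i : ι × ℤˣ} {x y : EuclideanSpace ℝ ι}
    (hx : x ∈ cubeFaceCone i) (hy : y ∈ cubeFaceCone i) (hxy : ‖x‖ = ‖y‖) :
    (2 - Fintype.card ι) * ‖x‖ ^ 2 ≤ (Fintype.card ι : ℝ) * ⟪x, y⟫ := by
  set n := (Fintype.card ι : ℝ)
  set a : ℝ := (i.2 : ℤ) * x i.1
  set b : ℝ := (i.2 : ℤ) * y i.1
  have ha : 0 ≤ a := (abs_nonneg _).trans (hx i.1)
  have hb : 0 ≤ b := (abs_nonneg _).trans (hy i.1)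
  have hxa : ‖x‖ ^ 2 ≤ n * a ^ 2 := norm_sq_le_card_mul_sq_of_mem_cubeFaceCone hx
  have hyb : ‖x‖ ^ 2 ≤ n * b ^ 2 := hxy ▸ norm_sq_le_card_mul_sq_of_mem_cubeFaceCone hy
  have hab : ‖x‖ ^ 2 ≤ n * (a * b) := by
    rcases le_total a b with h | h
    · exact hxa.trans (by rw [sq]; gcongr)
    · exact hyb.trans (by rw [sq]; gcongr)
  have hcoord : (a + b) ^ 2 ≤ ‖x + y‖ ^ 2 := by
    have h : (a + b) ^ 2 = ‖(x + y) i.1‖ ^ 2 := by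
      simp [a, b, ← mul_add, mul_pow, ← Int.cast_pow, ← Units.val_pow_eq_pow_val]
    rw [h]
    gcongr
    exact PiLp.norm_apply_le _ _
  have hscaled : n * (a + b) ^ 2 ≤ n * ‖x + y‖ ^ 2 := by gcongr
  rw [norm_add_sq_real, ← hxy] at hscaled
  linarith

end CubeFaces

section ConvexHull

theorem mem_convexHull_of_smul_add_smul_add_smul_eq {E : Type*} [AddCommGroup E] [Module ℝ E]
    {V : Set E} {x y z w : E} {a b c : ℝ} (hx : x ∈ V) (hy : y ∈ V) (hz : z ∈ V) (ha : 0 ≤ a)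
    (hb : 0 ≤ b) (hc : 0 ≤ c) (habc : a + b + c = 1) (hw : a • x + b • y + c • z = w) :
    w ∈ convexHull ℝ V := by
  refine mem_convexHull_of_exists_fintype ![a, b, c] ![x, y, z] ?_ ?_ ?_ ?_
  · simp [Fin.forall_fin_succ, ha, hb, hc]
  · simpa [Fin.sum_univ_three] using habc
  · simp [Fin.forall_fin_succ, hx, hy, hz]
  · simpa [Fin.sum_univ_three] using hw

variable {E : Type*} [NormedAddCommGroup E]

theorem convexHull_subset_closedBall_zero [NormedSpace ℝ E] {V : Set E} {R : ℝ}
    (hV : ∀ v ∈ V, ‖v‖ ≤ R) : convexHull ℝ V ⊆ Metric.closedBall 0 R :=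
  convexHull_min (fun v hv => mem_closedBall_zero_iff.2 (hV v hv)) (convex_closedBall 0 R)

theorem mem_of_mem_convexHull_of_norm_eq [NormedSpace ℝ E] [StrictConvexSpace ℝ E] {V : Set E}
    {R : ℝ} (hR : R ≠ 0) (hV : ∀ v ∈ V, ‖v‖ ≤ R) {x : E} (hx : x ∈ convexHull ℝ V)
    (hxR : ‖x‖ = R) : x ∈ V :=
  extremePoints_convexHull_subset <|
    inter_extremePoints_subset_extremePoints_of_subset (convexHull_subset_closedBall_zero hV)
      ⟨hx, StrictConvexSpace.sphere_subset_extremePoints_closedBall 0 hR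
        (mem_sphere_zero_iff_norm.2 hxR)⟩

theorem le_inner_of_mem_convexHull [InnerProductSpace ℝ E] {V : Set E} {c : ℝ}
    (hV : ∀ v ∈ V, ∀ w ∈ V, c ≤ ⟪v, w⟫) {x y : E}
    (hx : x ∈ convexHull ℝ V) (hy : y ∈ convexHull ℝ V) : c ≤ ⟪x, y⟫ := by
  have hconvex (z : E) : Convex ℝ {w | c ≤ ⟪z, w⟫} :=
    convex_halfSpace_ge (innerₗ E z).isLinear c
  have hvertex : ∀ v ∈ V, c ≤ ⟪v, y⟫ := fun v hv => convexHull_min (hV v hv) (hconvex v) hy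
  rw [real_inner_comm]
  exact convexHull_min (fun v hv => (hvertex v hv).trans_eq (real_inner_comm _ _)) (hconvex y) hx

theorem mul_norm_mul_norm_lt_of_mem_convexHull [InnerProductSpace ℝ E] {V : Set E} {c R : ℝ}
    (hc : 0 < c) (hnorm : ∀ v ∈ V, ‖v‖ ≤ R) (hinner : ∀ v ∈ V, ∀ w ∈ V, c ≤ ⟪v, w⟫) {x y : E}
    (hx : x ∈ convexHull ℝ V) (hy : y ∈ convexHull ℝ V)
    (hxy : x ∈ V → y ∈ V → c < ⟪x, y⟫) : c * (‖x‖ * ‖y‖) < R ^ 2 * ⟪x, y⟫ := by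
  have hxR : ‖x‖ ≤ R := mem_closedBall_zero_iff.1 (convexHull_subset_closedBall_zero hnorm hx)
  have hyR : ‖y‖ ≤ R := mem_closedBall_zero_iff.1 (convexHull_subset_closedBall_zero hnorm hy)
  have hcxy : c ≤ ⟪x, y⟫ := le_inner_of_mem_convexHull hinner hx hy
  have hpos : 0 < ‖x‖ * ‖y‖ := (hc.trans_le hcxy).trans_le (real_inner_le_norm x y)
  have hx0 : 0 < ‖x‖ := pos_of_mul_pos_left hpos (norm_nonneg y)
  have hR : 0 < R := hx0.trans_le hxR
  have hle : ‖x‖ * ‖y‖ ≤ R ^ 2 := by rw [sq]; gcongr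
  rcases hle.lt_or_eq with hlt | heq
  · calc c * (‖x‖ * ‖y‖) < c * R ^ 2 := by gcongr
      _ ≤ R ^ 2 * ⟪x, y⟫ := by rw [mul_comm]; gcongr
  · have hxR' : ‖x‖ = R := by nlinarith
    have hyR' : ‖y‖ = R := by nlinarith
    have hlt := hxy (mem_of_mem_convexHull_of_norm_eq hR.ne' hnorm hx hxR')
      (mem_of_mem_convexHull_of_norm_eq hR.ne' hnorm hy hyR')
    rw [heq, mul_comm]
    gcongr

end ConvexHull

local notation "ℝ³" => EuclideanSpace ℝ (Fin 3)

noncomputable section Dodecahedron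

theorem real_inner_fin_three (x y : ℝ³) :
    ⟪x, y⟫ = x 0 * y 0 + x 1 * y 1 + x 2 * y 2 := by
  simp [PiLp.inner_apply, Fin.sum_univ_three, mul_comm]

/-- The vertices, in cyclic order, of the face with outer normal `(0, 1, φ)` of the dodecahedron
with vertices `(±1, ±1, ±1)` and the cyclic permutations of `(0, ±φ, ±1/φ)`, where `1/φ = φ - 1`. -/
def pentagonVertex : Fin 5 → ℝ³ :=
  ![!₂[0, φ, φ - 1], !₂[1, 1, 1], !₂[φ - 1, 0, φ], !₂[1 - φ, 0, φ], !₂[-1, 1, 1]]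

theorem inner_pentagonVertex (i j : Fin 5) :
    ⟪pentagonVertex i, pentagonVertex j⟫ =
      if i = j then 3 else if i = j + 1 ∨ j = i + 1 then 2 * φ - 1 else 1 := by
  have hφ := goldenRatio_sq
  rw [real_inner_fin_three]
  fin_cases i <;> fin_cases j <;> simp [pentagonVertex] <;> grind

theorem one_le_inner_pentagonVertex (i j : Fin 5) :
    1 ≤ ⟪pentagonVertex i, pentagonVertex j⟫ := by
  have := one_lt_goldenRatio
  rw [inner_pentagonVertex]
  split_ifs <;> linarith

theorem norm_pentagonVertex (i : Fin 5) : ‖pentagonVertex i‖ = √3 := by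
  rw [norm_eq_sqrt_real_inner, inner_pentagonVertex, if_pos rfl]

/-- For each of the six pairs of opposite faces, a symmetry of the dodecahedron carrying the pair
to the one containing `pentagonVertex`: a cyclic shift of the coordinates followed by a sign
change. -/
def dodecaFrame (i : Fin 3 × ℤˣ) : ℝ³ →ₗ[ℝ] ℝ³ where
  toFun x := !₂[x i.1, (i.2 : ℤ) * x (i.1 + 1), x (i.1 + 2)]
  map_add' x y := by ext j; fin_cases j <;> simp [mul_add]
  map_smul' c x := by ext j; fin_cases j <;> simp [mul_left_comm]

theorem dodecaFrame_apply (i : Fin 3 × ℤˣ) (x : ℝ³) :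
    dodecaFrame i x = !₂[x i.1, (i.2 : ℤ) * x (i.1 + 1), x (i.1 + 2)] := rfl

theorem inner_dodecaFrame (i : Fin 3 × ℤˣ) (x y : ℝ³) :
    ⟪dodecaFrame i x, dodecaFrame i y⟫ = ⟪x, y⟫ := by
  obtain ⟨k, s⟩ := i
  rw [real_inner_fin_three, real_inner_fin_three]
  rcases Int.units_eq_one_or s with rfl | rfl <;> fin_cases k <;>
    simp [dodecaFrame_apply] <;> ring

theorem norm_dodecaFrame (i : Fin 3 × ℤˣ) (x : ℝ³) : ‖dodecaFrame i x‖ = ‖x‖ := by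
  rw [norm_eq_sqrt_real_inner, inner_dodecaFrame, ← norm_eq_sqrt_real_inner]

/-- The linear form whose maximum on the dodecahedron, `φ ^ 2`, is attained on the face
`pentagonVertex`. -/
def faceHeight : ℝ³ →ₗ[ℝ] ℝ := innerₗ ℝ³ !₂[0, 1, φ]

theorem faceHeight_apply (x : ℝ³) : faceHeight x = x 1 + φ * x 2 := by
  simp [faceHeight, real_inner_fin_three]

theorem faceHeight_dodecaFrame (i : Fin 3 × ℤˣ) (x : ℝ³) :
    faceHeight (dodecaFrame i x) = (i.2 : ℤ) * x (i.1 + 1) + φ * x (i.1 + 2) := by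
  simp [faceHeight_apply, dodecaFrame_apply]

theorem exists_abs_faceHeight_dodecaFrame_dodecaFrame_eq (i j : Fin 3 × ℤˣ) (x : ℝ³) :
    ∃ l, |faceHeight (dodecaFrame j (dodecaFrame i x))| = |faceHeight (dodecaFrame l x)| := by
  obtain ⟨k, s⟩ := i
  obtain ⟨k', s'⟩ := j
  simp only [faceHeight_apply, dodecaFrame_apply]
  fin_cases k'
  · use (k, s * s')
    simp [mul_left_comm, mul_assoc]
  · use (k + 1, s')
    fin_cases k <;> simp
  · use (k + 2, s * s')
    rcases Int.units_eq_one_or s with rfl | rfl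
    · fin_cases k <;> simp
    · rw [← abs_neg]
      fin_cases k <;> simp <;> ring_nf

theorem eq_zero_of_forall_faceHeight_dodecaFrame_eq_zero {x : ℝ³}
    (hx : ∀ i, faceHeight (dodecaFrame i x) = 0) : x = 0 := by
  simp only [faceHeight_dodecaFrame] at hx
  have hcoord (k : Fin 3) : x (k + 1) = 0 := by
    have hpos := hx (k, 1)
    have hneg := hx (k, -1)
    push_cast at hpos hneg
    linarith
  ext j
  simpa using hcoord (j - 1)

theorem mem_convexHull_pentagonVertex_of_edges {y : ℝ³} (hface : y 2 = φ - (φ - 1) * y 1)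
    (hbase : 0 ≤ y 1) (hside : φ * |y 0| ≤ 1 + (φ - 1) * y 1)
    (hroof : |y 0| ≤ φ + 1 - φ * y 1) : y ∈ convexHull ℝ (range pentagonVertex) := by
  have hφ := goldenRatio_sq
  have hφ1 := one_lt_goldenRatio
  have hsideR : φ * y 0 ≤ 1 + (φ - 1) * y 1 :=
    (mul_le_mul_of_nonneg_left (le_abs_self _) goldenRatio_pos.le).trans hside
  have hsideL : φ * -y 0 ≤ 1 + (φ - 1) * y 1 :=
    (mul_le_mul_of_nonneg_left (neg_le_abs _) goldenRatio_pos.le).trans hside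
  obtain ⟨hroofL, hroofR⟩ := abs_le.1 hroof
  -- The diagonals from vertex `0` cut the pentagon into three triangles, one for each case; the
  -- weights are barycentric coordinates.
  by_cases hright : 0 ≤ (φ + 1) * y 0 + y 1 - φ
  · refine mem_convexHull_of_smul_add_smul_add_smul_eq
      (mem_range_self 0) (mem_range_self 1) (mem_range_self 2)
      (a := (1 - φ * y 0 + (φ - 1) * y 1) / 2) (b := ((φ + 1) * y 0 + y 1 - φ) / 2)
      (c := (φ + 1 - y 0 - φ * y 1) / 2) (by linarith) (by linarith) (by linarith) (by ring) ?_
    ext i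
    fin_cases i <;> simp [pentagonVertex] <;> grind
  by_cases hleft : 0 ≤ -(φ + 1) * y 0 + y 1 - φ
  · refine mem_convexHull_of_smul_add_smul_add_smul_eq
      (mem_range_self 0) (mem_range_self 3) (mem_range_self 4)
      (a := (1 + φ * y 0 + (φ - 1) * y 1) / 2) (b := (φ + 1 + y 0 - φ * y 1) / 2)
      (c := (-(φ + 1) * y 0 + y 1 - φ) / 2) (by linarith) (by linarith) (by linarith) (by ring) ?_
    ext i
    fin_cases i <;> simp [pentagonVertex] <;> grind
  · refine mem_convexHull_of_smul_add_smul_add_smul_eq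
      (mem_range_self 0) (mem_range_self 2) (mem_range_self 3)
      (a := (φ - 1) * y 1) (b := (1 - (φ - 1) * y 1 + φ * y 0) / 2)
      (c := (1 - (φ - 1) * y 1 - φ * y 0) / 2)
      (by nlinarith) (by nlinarith) (by nlinarith) (by ring) ?_
    ext i
    fin_cases i <;> simp [pentagonVertex] <;> grind

theorem mem_convexHull_pentagonVertex {y : ℝ³} (hy : faceHeight y = φ ^ 2)
    (hle : ∀ i, |faceHeight (dodecaFrame i y)| ≤ φ ^ 2) :
    y ∈ convexHull ℝ (range pentagonVertex) := by
  have hφ := goldenRatio_sq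
  have hφ1 := one_lt_goldenRatio
  rw [faceHeight_apply] at hy
  simp only [faceHeight_dodecaFrame] at hle
  have hface : y 2 = φ - (φ - 1) * y 1 := by
    linear_combination (φ - 1) * hy - (y 2 - φ) * hφ
  have hbase : -y 1 + φ * y 2 ≤ φ ^ 2 := by simpa using (abs_le.1 (hle (0, -1))).2
  have hsideR : y 2 + φ * y 0 ≤ φ ^ 2 := by simpa using (abs_le.1 (hle (1, 1))).2
  have hsideL : -φ ^ 2 ≤ -y 2 + φ * y 0 := by simpa using (abs_le.1 (hle (1, -1))).1
  have hroofR : y 0 + φ * y 1 ≤ φ ^ 2 := by simpa using (abs_le.1 (hle (2, 1))).2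
  have hroofL : -y 0 + φ * y 1 ≤ φ ^ 2 := by simpa using (abs_le.1 (hle (2, -1))).2
  rw [hface] at hbase hsideR hsideL
  refine mem_convexHull_pentagonVertex_of_edges hface ?_ ?_ ?_
  · nlinarith
  · rw [← abs_of_pos goldenRatio_pos, ← abs_mul, abs_of_pos goldenRatio_pos, abs_le]
    constructor <;> nlinarith
  · rw [abs_le]
    constructor <;> nlinarith

/-- The union of the lines joining the origin to a face of the dodecahedron, three vertices of
which are left out: nonadjacent vertices make an angle of cosine exactly `1 / 3`, so only the
adjacent vertices `0` and `1` are kept. -/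
def dodecaClass (i : Fin 3 × ℤˣ) : Set ℝ³ :=
  {x | ∃ (t : ℝ) (p : ℝ³), dodecaFrame i x = t • p ∧ p ∈ convexHull ℝ (range pentagonVertex) ∧
    (p ∈ range pentagonVertex → p = pentagonVertex 0 ∨ p = pentagonVertex 1)}

theorem mem_dodecaClass_of_dodecaFrame_eq_smul_pentagonVertex {i : Fin 3 × ℤˣ} {x : ℝ³} {t : ℝ}
    {j : Fin 5} (hj : j = 0 ∨ j = 1) (hx : dodecaFrame i x = t • pentagonVertex j) :
    x ∈ dodecaClass i :=
  ⟨t, pentagonVertex j, hx, subset_convexHull ℝ _ (mem_range_self j),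
    fun _ => hj.imp (congrArg _) (congrArg _)⟩

theorem exists_dodecaFrame_eq_smul_pentagonVertex {i : Fin 3 × ℤˣ} {x : ℝ³} {t : ℝ} {j : Fin 5}
    (hx : dodecaFrame i x = t • pentagonVertex j) :
    ∃ (i' : Fin 3 × ℤˣ) (t' : ℝ) (j' : Fin 5),
      (j' = 0 ∨ j' = 1) ∧ dodecaFrame i' x = t' • pentagonVertex j' := by
  obtain ⟨k, s⟩ := i
  have h0 : x k = t * pentagonVertex j 0 := congrArg (· 0) hx
  have h1 : (s : ℤ) * x (k + 1) = t * pentagonVertex j 1 := congrArg (· 1) hx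
  have h2 : x (k + 2) = t * pentagonVertex j 2 := congrArg (· 2) hx
  fin_cases j
  · exact ⟨(k, s), t, 0, .inl rfl, hx⟩
  · exact ⟨(k, s), t, 1, .inr rfl, hx⟩
  · refine ⟨(k + 1, 1), t, 0, .inl rfl, PiLp.ext fun l => ?_⟩
    fin_cases l <;> fin_cases k <;> simp_all [dodecaFrame_apply, pentagonVertex]
  · refine ⟨(k + 1, -1), -t, 0, .inl rfl, PiLp.ext fun l => ?_⟩
    fin_cases l <;> fin_cases k <;> simp_all [dodecaFrame_apply, pentagonVertex] <;> ring
  · rcases Int.units_eq_one_or s with rfl | rfl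
    · refine ⟨(k + 2, -1), t, 1, .inr rfl, PiLp.ext fun l => ?_⟩
      fin_cases l <;> fin_cases k <;> simp_all [dodecaFrame_apply, pentagonVertex]
    · refine ⟨(k + 1, -1), -t, 1, .inr rfl, PiLp.ext fun l => ?_⟩
      fin_cases l <;> fin_cases k <;> simp_all [dodecaFrame_apply, pentagonVertex] <;> linarith

theorem exists_dodecaFrame_eq_smul_mem_convexHull {x : ℝ³} (hx : x ≠ 0) :
    ∃ (i : Fin 3 × ℤˣ) (t : ℝ), ∃ p ∈ convexHull ℝ (range pentagonVertex),
      dodecaFrame i x = t • p := by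
  obtain ⟨i, hi⟩ := Finite.exists_max fun i => |faceHeight (dodecaFrame i x)|
  set h := faceHeight (dodecaFrame i x) with h_def
  have hh : h ≠ 0 := fun h0 => hx <| eq_zero_of_forall_faceHeight_dodecaFrame_eq_zero fun j =>
    abs_nonpos_iff.1 <| (hi j).trans_eq (by rw [h0, abs_zero])
  have hφ : φ ≠ 0 := goldenRatio_ne_zero
  refine ⟨i, h / φ ^ 2, (φ ^ 2 / h) • dodecaFrame i x, mem_convexHull_pentagonVertex ?_ ?_, ?_⟩
  · rw [map_smul, smul_eq_mul, ← h_def, div_mul_cancel₀ _ hh]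
  · intro j
    obtain ⟨l, hl⟩ := exists_abs_faceHeight_dodecaFrame_dodecaFrame_eq i j x
    calc |faceHeight (dodecaFrame j ((φ ^ 2 / h) • dodecaFrame i x))|
        = φ ^ 2 / |h| * |faceHeight (dodecaFrame l x)| := by
          rw [map_smul, map_smul, smul_eq_mul, abs_mul, abs_div, abs_sq, hl]
      _ ≤ φ ^ 2 / |h| * |h| := mul_le_mul_of_nonneg_left (hi l) (by positivity)
      _ = φ ^ 2 := div_mul_cancel₀ _ (abs_ne_zero.2 hh)
  · rw [smul_smul, div_mul_div_cancel₀ (pow_ne_zero 2 hφ), div_self hh, one_smul]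

theorem exists_mem_dodecaClass {x : ℝ³} (hx : x ≠ 0) : ∃ i, x ∈ dodecaClass i := by
  obtain ⟨i, t, p, hp, hxp⟩ := exists_dodecaFrame_eq_smul_mem_convexHull hx
  by_cases hvertex : p ∈ range pentagonVertex
  · obtain ⟨j, rfl⟩ := hvertex
    obtain ⟨i', t', j', hj', hx'⟩ := exists_dodecaFrame_eq_smul_pentagonVertex hxp
    exact ⟨i', mem_dodecaClass_of_dodecaFrame_eq_smul_pentagonVertex hj' hx'⟩
  · exact ⟨i, t, p, hxp, hp, fun h => absurd h hvertex⟩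

theorem norm_mul_norm_lt_of_mem_dodecaClass {i : Fin 3 × ℤˣ} {x y : ℝ³} (hx0 : x ≠ 0)
    (hy0 : y ≠ 0) (hx : x ∈ dodecaClass i) (hy : y ∈ dodecaClass i) :
    ‖x‖ * ‖y‖ < 3 * |⟪x, y⟫| := by
  obtain ⟨t, p, hxp, hp, hpV⟩ := hx
  obtain ⟨u, q, hyq, hq, hqV⟩ := hy
  have hpq : ‖p‖ * ‖q‖ < 3 * ⟪p, q⟫ := by
    have h := mul_norm_mul_norm_lt_of_mem_convexHull one_pos
      (forall_mem_range.2 fun j => (norm_pentagonVertex j).le)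
      (forall_mem_range.2 fun j => forall_mem_range.2 (one_le_inner_pentagonVertex j)) hp hq
      fun hpr hqr => by
        have := one_lt_goldenRatio
        rcases hpV hpr with rfl | rfl <;> rcases hqV hqr with rfl | rfl <;>
          rw [inner_pentagonVertex] <;> norm_num <;> linarith
    rwa [one_mul, sq_sqrt zero_le_three] at h
  have hnorm : ‖x‖ * ‖y‖ = |t| * |u| * (‖p‖ * ‖q‖) := by
    rw [← norm_dodecaFrame i x, ← norm_dodecaFrame i y, hxp, hyq, norm_smul, norm_smul,
      Real.norm_eq_abs, Real.norm_eq_abs, mul_mul_mul_comm]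
  have hinner : |⟪x, y⟫| = |t| * |u| * |⟪p, q⟫| := by
    rw [← inner_dodecaFrame i, hxp, hyq, real_inner_smul_left, real_inner_smul_right, abs_mul,
      abs_mul, mul_assoc]
  have htu : 0 < |t| * |u| := by
    refine pos_of_mul_pos_left (hnorm ▸ mul_pos (norm_pos_iff.2 hx0) (norm_pos_iff.2 hy0)) ?_
    positivity
  calc ‖x‖ * ‖y‖ = |t| * |u| * (‖p‖ * ‖q‖) := hnorm
    _ < |t| * |u| * (3 * |⟪p, q⟫|) := by
      refine mul_lt_mul_of_pos_left (hpq.trans_le ?_) htu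
      linarith [le_abs_self ⟪p, q⟫]
    _ = 3 * |⟪x, y⟫| := by rw [hinner]; ring

end Dodecahedron

theorem inner_eq_of_norm_sub_eq_one {E : Type*} [NormedAddCommGroup E] [InnerProductSpace ℝ E]
    {x y : E} {r : ℝ} (hx : ‖x‖ = r) (hy : ‖y‖ = r) (hxy : ‖x - y‖ = 1) :
    ⟪x, y⟫ = r ^ 2 - 1 / 2 := by
  have h := norm_sub_sq_real x y
  rw [hx, hy, hxy] at h
  linarith

theorem norm_sub_ne_one_of_mem_cubeFaceCone {i : Fin 3 × ℤˣ} {x y : ℝ³} {r : ℝ}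
    (hr : r ^ 2 < 3 / 8) (hx : ‖x‖ = r) (hy : ‖y‖ = r) (hxi : x ∈ cubeFaceCone i)
    (hyi : y ∈ cubeFaceCone i) : ‖x - y‖ ≠ 1 := by
  intro hxy
  have h := le_card_mul_inner_of_mem_cubeFaceCone hxi hyi (hx.trans hy.symm)
  rw [inner_eq_of_norm_sub_eq_one hx hy hxy, hx, Fintype.card_fin] at h
  push_cast at h
  linarith

theorem norm_sub_ne_one_of_mem_dodecaClass {i : Fin 3 × ℤˣ} {x y : ℝ³} {r : ℝ}
    (hr : 3 / 8 ≤ r ^ 2) (hr' : r ^ 2 ≤ 3 / 4) (hx : ‖x‖ = r) (hy : ‖y‖ = r)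
    (hxi : x ∈ dodecaClass i) (hyi : y ∈ dodecaClass i) : ‖x - y‖ ≠ 1 := by
  intro hxy
  have hr0 : r ≠ 0 := by rintro rfl; norm_num at hr
  have h := norm_mul_norm_lt_of_mem_dodecaClass (norm_ne_zero_iff.1 (hx ▸ hr0))
    (norm_ne_zero_iff.1 (hy ▸ hr0)) hxi hyi
  rw [inner_eq_of_norm_sub_eq_one hx hy hxy, hx, hy] at h
  rcases abs_cases (r ^ 2 - 1 / 2) with ⟨habs, -⟩ | ⟨habs, -⟩ <;> rw [habs] at h <;> linarith

theorem exists_fin_coloring_of_cover {α κ : Type*} [Fintype κ] {n : ℕ}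
    (hn : Fintype.card κ = n) {C : κ → Set α} {adj : α → α → Prop} (hcover : ∀ x, ∃ i, x ∈ C i)
    (hC : ∀ i, ∀ x ∈ C i, ∀ y ∈ C i, ¬ adj x y) :
    ∃ f : α → Fin n, ∀ x y, adj x y → f x ≠ f y := by
  choose f hf using hcover
  refine ⟨Fintype.equivFinOfCardEq hn ∘ f, fun x y hxy hfxy => ?_⟩
  have h : f x = f y := (Fintype.equivFinOfCardEq hn).injective hfxy
  exact hC (f x) x (hf x) y (h ▸ hf y) hxy

end

theorem sphere_six_coloring_combined_general (r : ℝ) (hr : r ≤ Real.sqrt 3 / 2) :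
    ∃ f : {x : EuclideanSpace ℝ (Fin 3) // ‖x‖ = r} → Fin 6,
      ∀ x y : {x : EuclideanSpace ℝ (Fin 3) // ‖x‖ = r},
        ‖(x : EuclideanSpace ℝ (Fin 3)) - (y : EuclideanSpace ℝ (Fin 3))‖ = 1 → f x ≠ f y := by
  have hcard : Fintype.card (Fin 3 × ℤˣ) = 6 := rfl
  rcases lt_or_ge (r ^ 2) (3 / 8) with hcube | hdodeca
  · exact exists_fin_coloring_of_cover hcard (C := fun i => Subtype.val ⁻¹' cubeFaceCone i)
      (fun x => exists_mem_cubeFaceCone x.1)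
      fun i x hx y hy => norm_sub_ne_one_of_mem_cubeFaceCone hcube x.2 y.2 hx hy
  · refine exists_fin_coloring_of_cover hcard (C := fun i => Subtype.val ⁻¹' dodecaClass i)
      (fun x => exists_mem_dodecaClass ?_)
      fun i x hx y hy => norm_sub_ne_one_of_mem_dodecaClass hdodeca ?_ x.2 y.2 hx hy
    · intro h
      norm_num [← x.2, h] at hdodeca
    · have hr0 : 0 ≤ r := x.2 ▸ norm_nonneg x.1
      calc r ^ 2 ≤ (Real.sqrt 3 / 2) ^ 2 := by gcongr
        _ = 3 / 4 := by rw [div_pow, Real.sq_sqrt zero_le_three]; norm_num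

theorem sphere_six_coloring_combined :
    ∀ r : ℝ, Real.sqrt (1 / 3) < r → r ≤ Real.sqrt 3 / 2 →
      ∃ f : {x : EuclideanSpace ℝ (Fin 3) // ‖x‖ = r} → Fin 6,
        ∀ x y : {x : EuclideanSpace ℝ (Fin 3) // ‖x‖ = r},
          ‖(x : EuclideanSpace ℝ (Fin 3)) - (y : EuclideanSpace ℝ (Fin 3))‖ = 1 →
            f x ≠ f y :=
  fun r _ hr => sphere_six_coloring_combined_general r hr
end

section
/- For every radius r with 0.85 ≤ r ≤ 1, there is a coloring of the sphere of radius r in ℝ³ with 7 colors avoiding unit distance; that is, a function f from {x ∈ ℝ³ : ‖x‖ = r} to a 7-element set such that f(x) ≠ f(y) whenever ‖x − y‖ = 1 (realized by a 21-tile quasi-scalable 7-tiling with 3-fold rotational symmetry). -/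
/-!
Two points of the sphere of radius `r` are at unit distance iff the cosine of the angle between them
is `κ = 1 - 1 / (2 r ^ 2)`, and `κ` runs through `[0.307…, 0.5]` as `r` runs through `[0.85, 1]`. So
we need to colour the rays from the origin such that no two rays of one colour enclose the critical
angle `arccos κ`. For each of the ranges `[0.30, 0.37]`, `[0.37, 0.43]` and `[0.43, 0.50]` of `κ`
there is a convex polyhedron with integer vertices and threefold symmetry that does this: each ray
gets the colour of the triangular facet it meets, except that some facets are cut in two by an arc
with a vertex of the polyhedron as centre and the critical angle as radius, which moves with `κ`.

Two pieces of the same colour are separated in one of three ways. Either all angles between their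
vertices are smaller than the critical angle, and then so are all angles between their points,
since circular caps are convex; or the pieces lie in small opposite caps; or an arc bounding one of
them keeps the other one away. In each case finitely many inequalities between integers suffice.
Contact at exactly the critical angle occurs only between an arc and its centre. It does no harm
because the centre also belongs to a piece of colour `0`, which takes precedence, whereas a piece
containing such an arc has another colour.
-/

open scoped InnerProductSpace
open PointedCone (hull subset_hull)

namespace SphereColoring

section InnerProductSpace

variable {V : Type*} [NormedAddCommGroup V] [InnerProductSpace ℝ V]

theorem le_inner_of_mem_hull_singleton {c : ℝ} {u v x : V} (hv : c * ‖v‖ ≤ ⟪u, v⟫_ℝ)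
    (hx : x ∈ hull ℝ {v}) : c * ‖x‖ ≤ ⟪u, x⟫_ℝ := by
  obtain ⟨⟨a, ha⟩, rfl⟩ := Submodule.mem_span_singleton.1 hx
  have hav := mul_le_mul_of_nonneg_left hv ha
  rw [Nonneg.mk_smul, norm_smul, real_inner_smul_right, Real.norm_of_nonneg ha]
  linarith

/-- An open circular cap stays convex when a single boundary ray is added to it. -/
theorem mem_hull_singleton_or_lt_inner {c : ℝ} (hc : 0 ≤ c) {u v : V} {s : Set V}
    (hv : c * ‖v‖ ≤ ⟪u, v⟫_ℝ) (hs : ∀ q ∈ s, q ∈ hull ℝ {v} ∨ c * ‖q‖ < ⟪u, q⟫_ℝ)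
    {x : V} (hx : x ∈ hull ℝ s) : x ∈ hull ℝ {v} ∨ c * ‖x‖ < ⟪u, x⟫_ℝ := by
  induction hx using Submodule.span_induction with
  | mem q hq => exact hs q hq
  | zero => exact .inl (zero_mem _)
  | add x y _ _ hx hy =>
    have hadd := mul_le_mul_of_nonneg_left (norm_add_le x y) hc
    rw [inner_add_right]
    rcases hx with hx | hx <;> rcases hy with hy | hy
    · exact .inl (add_mem hx hy)
    · have := le_inner_of_mem_hull_singleton hv hx
      exact .inr (by linarith)
    · have := le_inner_of_mem_hull_singleton hv hy
      exact .inr (by linarith)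
    · exact .inr (by linarith)
  | smul a x _ hx =>
    obtain rfl | ha := eq_zero_or_pos a
    · simp
    refine hx.imp (Submodule.smul_mem _ a) fun hx ↦ ?_
    obtain ⟨a, ha'⟩ := a
    have hax : a * (c * ‖x‖) < a * ⟪u, x⟫_ℝ := mul_lt_mul_of_pos_left hx ha
    rw [Nonneg.mk_smul, norm_smul, real_inner_smul_right, Real.norm_of_nonneg ha']
    linarith

theorem lt_inner_of_mem_hull {c : ℝ} (hc : 0 ≤ c) {u : V} {s : Set V}
    (hs : ∀ q ∈ s, c * ‖q‖ < ⟪u, q⟫_ℝ) {x : V} (hx : x ∈ hull ℝ s) (hx0 : x ≠ 0) :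
    c * ‖x‖ < ⟪u, x⟫_ℝ := by
  have := mem_hull_singleton_or_lt_inner hc (v := 0) (by simp) (fun q hq ↦ .inr (hs q hq)) hx
  simpa [Submodule.mem_span_singleton, hx0] using this

theorem mem_hull_singleton_or_lt_inner_of_close {κ : ℝ} (hκ : 0 ≤ κ) {s t : Set V} {v x y : V}
    (hv : κ * ‖x‖ * ‖v‖ ≤ ⟪x, v⟫_ℝ)
    (hst : ∀ q ∈ t, q = v ∨ ∀ p ∈ s, κ * ‖q‖ * ‖p‖ < ⟪q, p⟫_ℝ)
    (hx : x ∈ hull ℝ s) (hx0 : x ≠ 0) (hy : y ∈ hull ℝ t) :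
    y ∈ hull ℝ {v} ∨ κ * ‖x‖ * ‖y‖ < ⟪x, y⟫_ℝ := by
  refine mem_hull_singleton_or_lt_inner (by positivity) hv (fun q hq ↦ ?_) hy
  refine (hst q hq).imp (fun h ↦ subset_hull h) fun h ↦ ?_
  have := lt_inner_of_mem_hull (by positivity) h hx hx0
  rw [real_inner_comm]
  linarith

theorem inner_lt_of_opposite_caps {σ : ℝ} (hσ : 0 ≤ σ) {m x y : V}
    (hx : σ * ‖m‖ * ‖x‖ < ⟪m, x⟫_ℝ) (hy : σ * ‖m‖ * ‖y‖ < ⟪-m, y⟫_ℝ) :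
    ⟪x, y⟫_ℝ < (1 - 2 * σ ^ 2) * ‖x‖ * ‖y‖ := by
  have hx0 : 0 < ‖x‖ := norm_pos_iff.2 (by rintro rfl; simp at hx)
  have hy0 : 0 < ‖y‖ := norm_pos_iff.2 (by rintro rfl; simp at hy)
  set w := ‖y‖ • x - ‖x‖ • y with hw
  have hnorm : ‖w‖ ^ 2 = 2 * ‖x‖ * ‖y‖ * (‖x‖ * ‖y‖ - ⟪x, y⟫_ℝ) := by
    simp only [hw, norm_sub_sq_real, norm_smul, norm_norm, real_inner_smul_left,
      real_inner_smul_right]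
    ring
  have hlt : 2 * σ * ‖x‖ * ‖y‖ < ‖w‖ := by
    refine lt_of_mul_lt_mul_left ?_ (norm_nonneg m)
    calc ‖m‖ * (2 * σ * ‖x‖ * ‖y‖)
        = ‖y‖ * (σ * ‖m‖ * ‖x‖) + ‖x‖ * (σ * ‖m‖ * ‖y‖) := by ring
      _ < ‖y‖ * ⟪m, x⟫_ℝ + ‖x‖ * ⟪-m, y⟫_ℝ := by gcongr
      _ = ⟪m, w⟫_ℝ := by
        rw [hw, inner_sub_right, real_inner_smul_right, real_inner_smul_right, inner_neg_left]
        ring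
      _ ≤ ‖m‖ * ‖w‖ := real_inner_le_norm m w
  have hsq : (2 * σ * ‖x‖ * ‖y‖) ^ 2 < ‖w‖ ^ 2 := by gcongr
  refine lt_of_mul_lt_mul_left ?_ (by positivity : 0 ≤ 2 * ‖x‖ * ‖y‖)
  linarith

theorem inner_mul_inner_le_of_mem_hull {s t : Set V} {v x y : V}
    (hst : ∀ p ∈ s, ∀ q ∈ t, ⟪p, q⟫_ℝ * ⟪v, v⟫_ℝ ≤ ⟪p, v⟫_ℝ * ⟪v, q⟫_ℝ)
    (hx : x ∈ hull ℝ s) (hy : y ∈ hull ℝ t) :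
    ⟪x, y⟫_ℝ * ⟪v, v⟫_ℝ ≤ ⟪x, v⟫_ℝ * ⟪v, y⟫_ℝ := by
  induction hx, hy using Submodule.span_induction₂ with
  | mem_mem p q hp hq => exact hst p hp q hq
  | zero_left | zero_right => simp
  | add_left x y z _ _ _ hx hy => simp only [inner_add_left]; linarith
  | add_right x y z _ _ _ hx hy => simp only [inner_add_right]; linarith
  | smul_left a x y _ _ h =>
    have := mul_le_mul_of_nonneg_left h a.2
    rw [← Nonneg.coe_smul, real_inner_smul_left, real_inner_smul_left]
    linarith
  | smul_right a x y _ _ h =>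
    have := mul_le_mul_of_nonneg_left h a.2
    rw [← Nonneg.coe_smul, real_inner_smul_right, real_inner_smul_right]
    linarith

/-- Here `s F` is the set of vertices of a facet `F` of a convex polyhedron and `ℓ F = 1` the plane
spanned by it. A point `x` lies in the cone over the facet `F` that maximizes `ℓ F x`: if the
coefficient of the vertex `p` of `F` were negative, then the facet `G` beyond the edge opposite to
`p` would give a larger value. -/
theorem exists_mem_hull_of_convex {ι : Type*} [Finite ι] [Nonempty ι] {s : ι → Set V}
    (hspan : ∀ F, Submodule.span ℝ (s F) = ⊤) {ℓ : ι → V →ₗ[ℝ] ℝ}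
    (hℓ : ∀ F, ∀ p ∈ s F, ℓ F p = 1)
    (hadj : ∀ F, ∀ p ∈ s F, ∃ G, (∀ q ∈ s F, q ≠ p → ℓ G q = 1) ∧ ℓ G p < 1) (x : V) :
    ∃ F, x ∈ hull ℝ (s F) := by
  obtain ⟨F, hF⟩ := Finite.exists_max fun F ↦ ℓ F x
  obtain ⟨c, hc, rfl⟩ := Submodule.mem_span_set.1 (hspan F ▸ Submodule.mem_top (x := x))
  refine ⟨F, sum_mem fun p hp ↦ ?_⟩
  obtain ⟨G, hG, hGp⟩ := hadj F p (hc hp)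
  have hsum : c.sum (fun q a ↦ a * (1 - ℓ G q)) = c p * (1 - ℓ G p) :=
    Finset.sum_eq_single p (fun q hq hqp ↦ by simp only [hG q (hc hq) hqp]; ring)
      fun h ↦ absurd hp h
  have hFsum : ℓ F (c.sum fun q a ↦ a • q) = c.sum fun _ a ↦ a := by
    rw [map_finsuppSum]
    exact Finset.sum_congr rfl fun q hq ↦ by simp [hℓ F q (hc hq)]
  have hGsum : ℓ G (c.sum fun q a ↦ a • q) = c.sum fun q a ↦ a * ℓ G q := by
    simp [map_finsuppSum]
  have hle := hF G
  have hcp : 0 ≤ c p := by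
    simp only [hFsum, hGsum] at hle
    simp only [mul_sub, mul_one, Finsupp.sum_sub] at hsum
    nlinarith
  exact PointedCone.smul_mem _ hcp (subset_hull (hc hp))

theorem inner_eq_of_norm_sub_eq_one {r : ℝ} (hr : r ≠ 0) {x y : V} (hx : ‖x‖ = r) (hy : ‖y‖ = r)
    (hxy : ‖x - y‖ = 1) : ⟪x, y⟫_ℝ = (1 - 1 / (2 * r ^ 2)) * ‖x‖ * ‖y‖ := by
  have h := norm_sub_sq_real x y
  rw [hxy, hx, hy] at h
  rw [hx, hy]
  field_simp
  linarith

end InnerProductSpace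

/-- Euclidean space of dimension three. -/
abbrev Space := EuclideanSpace ℝ (Fin 3)

/-- The colouring `f` of the rays from the origin separates rays whose angle has cosine `κ`. -/
def AvoidsCos (κ : ℝ) (f : Space → Fin 7) : Prop :=
  ∀ x y, x ≠ 0 → y ≠ 0 → ⟪x, y⟫_ℝ = κ * ‖x‖ * ‖y‖ → f x ≠ f y

/-- An integer vector, standing for the ray it spans and so for a point of the sphere. -/
structure IntVec where
  (x y z : ℤ)
  deriving DecidableEq

namespace IntVec

instance : Sub IntVec := ⟨fun u v ↦ ⟨u.x - v.x, u.y - v.y, u.z - v.z⟩⟩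

@[simp] theorem sub_x (u v : IntVec) : (u - v).x = u.x - v.x := rfl
@[simp] theorem sub_y (u v : IntVec) : (u - v).y = u.y - v.y := rfl
@[simp] theorem sub_z (u v : IntVec) : (u - v).z = u.z - v.z := rfl

/-- The dot product, with integer values. -/
def dot (u v : IntVec) : ℤ := u.x * v.x + u.y * v.y + u.z * v.z

/-- The cross product. -/
def cross (u v : IntVec) : IntVec :=
  ⟨u.y * v.z - u.z * v.y, u.z * v.x - u.x * v.z, u.x * v.y - u.y * v.x⟩

/-- The rotation of order three about the axis through `(1, 1, 1)`, the symmetry of the tilings. -/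
def rot : IntVec → IntVec
  | ⟨x, y, z⟩ => ⟨z, x, y⟩

/-- The vector as an element of Euclidean space. -/
def toSpace (u : IntVec) : Space := !₂[(u.x : ℝ), (u.y : ℝ), (u.z : ℝ)]

theorem toSpace_sub (u v : IntVec) : (u - v).toSpace = u.toSpace - v.toSpace := by
  ext i; fin_cases i <;> simp [toSpace]

theorem inner_toSpace (u v : IntVec) : ⟪u.toSpace, v.toSpace⟫_ℝ = u.dot v := by
  simp [toSpace, dot, PiLp.inner_apply, Fin.sum_univ_three, mul_comm]

theorem cramer (a b c : IntVec) (x : Space) :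
    (a.dot (b.cross c) : ℝ) • x = ⟪(b.cross c).toSpace, x⟫_ℝ • a.toSpace +
      ⟪(c.cross a).toSpace, x⟫_ℝ • b.toSpace + ⟪(a.cross b).toSpace, x⟫_ℝ • c.toSpace := by
  ext i
  fin_cases i <;>
    simp [dot, cross, toSpace, PiLp.inner_apply, Fin.sum_univ_three] <;> ring

/-- The angle between `u` and `v` is acute and the square of its cosine exceeds `num / den`. -/
def CosSqGt (num den : ℤ) (u v : IntVec) : Prop :=
  0 < u.dot v ∧ num * (u.dot u * v.dot v) < den * (u.dot v * u.dot v)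

instance (num den : ℤ) (u v : IntVec) : Decidable (CosSqGt num den u v) :=
  inferInstanceAs (Decidable (_ ∧ _))

theorem CosSqGt.lt_inner {num den : ℤ} {u v : IntVec} (h : CosSqGt num den u v) (hden : 0 < den)
    {c : ℝ} (hc : c ^ 2 * den ≤ num) :
    c * ‖u.toSpace‖ * ‖v.toSpace‖ < ⟪u.toSpace, v.toSpace⟫_ℝ := by
  obtain ⟨hpos, hlt⟩ := h
  have hden' : (0 : ℝ) < den := by exact_mod_cast hden
  have hpos' : (0 : ℝ) < ⟪u.toSpace, v.toSpace⟫_ℝ := by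
    rw [inner_toSpace]
    exact_mod_cast hpos
  have hlt' : num * (‖u.toSpace‖ ^ 2 * ‖v.toSpace‖ ^ 2) <
      den * (⟪u.toSpace, v.toSpace⟫_ℝ * ⟪u.toSpace, v.toSpace⟫_ℝ) := by
    simp only [← real_inner_self_eq_norm_sq, inner_toSpace]
    exact_mod_cast hlt
  refine lt_of_pow_lt_pow_left₀ 2 hpos'.le (lt_of_mul_lt_mul_left ?_ hden'.le)
  calc den * (c * ‖u.toSpace‖ * ‖v.toSpace‖) ^ 2
      = c ^ 2 * den * (‖u.toSpace‖ ^ 2 * ‖v.toSpace‖ ^ 2) := by ring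
    _ ≤ num * (‖u.toSpace‖ ^ 2 * ‖v.toSpace‖ ^ 2) := by gcongr
    _ < den * ⟪u.toSpace, v.toSpace⟫_ℝ ^ 2 := by rwa [sq ⟪_, _⟫_ℝ]

end IntVec

/-- A piece of the sphere of one colour: a spherical triangle or a part of it cut off by an arc. The
arc around `v` consists of the points at unit distance from `v`, so that the piece depends on the
critical cosine `κ`; see `Tile.region`. -/
structure Tile where
  verts : List IntVec
  /-- If this is `some v`, the tile ends at the arc around `v`, which belongs to it, and lies on the
  same side as `v`. -/
  inner : Option IntVec
  /-- If this is `some v`, the tile ends at the arc around `v`, which does not belong to it, and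
  lies on the side opposite to `v`. -/
  outer : Option IntVec
  color : Fin 7

namespace Tile

/-- The cone over the triangle containing the tile. -/
def cone (T : Tile) : PointedCone ℝ Space := hull ℝ (IntVec.toSpace '' {p | p ∈ T.verts})

/-- The cone over the tile for the critical cosine `κ`. -/
def region (κ : ℝ) (T : Tile) : Set Space :=
  {x | x ∈ T.cone ∧ (∀ v ∈ T.inner, κ * ‖x‖ * ‖v.toSpace‖ ≤ ⟪x, v.toSpace⟫_ℝ) ∧
    ∀ v ∈ T.outer, ⟪x, v.toSpace⟫_ℝ < κ * ‖x‖ * ‖v.toSpace‖}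

/-- Vertices of `S` and `T` enclose angles with cosine above `hi / 100`, where `T` may also contain
the centre of the arc bounding `S`, as the arc already keeps `S` within reach of it. -/
def IsClose (hi : ℤ) (S T : Tile) : Prop :=
  ∀ q ∈ T.verts, q ∈ S.inner ∨ ∀ p ∈ S.verts, q.CosSqGt (hi * hi) 10000 p

/-- `S` and `T` lie in opposite caps around `m` and `-m`, where `m` is the difference of two
vertices. The caps have angular radius `ρ` with `cos ρ ^ 2 = (1 - lo / 100) / 2`, so that the angle
between points of different caps exceeds `π - 2 * ρ`, the cosine of which is `lo / 100`. -/
def IsFar (lo : ℤ) (S T : Tile) : Prop :=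
  ∃ p ∈ S.verts, ∃ q ∈ T.verts, (∀ p' ∈ S.verts, (p - q).CosSqGt (100 - lo) 200 p') ∧
    ∀ q' ∈ T.verts, (q - p).CosSqGt (100 - lo) 200 q'

/-- `S` lies outside the arc around some `v`, and the projections of vertices of `S` and `T` to the
plane orthogonal to `v` enclose no acute angle, so that `S` is further from `T` than from `v`. -/
def IsShielded (S T : Tile) : Prop :=
  ∃ v ∈ S.outer, ∀ q ∈ T.verts, 0 < v.dot q ∧ ∀ p ∈ S.verts, p.dot q * v.dot v ≤ p.dot v * v.dot q

/-- One of the three criteria that keep points of `S` and `T` from being at unit distance. -/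
def IsSeparated (lo hi : ℤ) (S T : Tile) : Prop := IsClose hi S T ∨ IsFar lo S T ∨ IsShielded S T

instance (hi : ℤ) (S T : Tile) : Decidable (IsClose hi S T) :=
  inferInstanceAs (Decidable (∀ _ ∈ _, _))

instance (lo : ℤ) (S T : Tile) : Decidable (IsFar lo S T) :=
  inferInstanceAs (Decidable (∃ _ ∈ _, _))

instance (S T : Tile) : Decidable (IsShielded S T) :=
  inferInstanceAs (Decidable (∃ _ ∈ _, _))

instance (lo hi : ℤ) (S T : Tile) : Decidable (IsSeparated lo hi S T) :=
  inferInstanceAs (Decidable (_ ∨ _))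

section Separation

variable {κ : ℝ} {lo hi : ℤ} {S T : Tile} {x y : Space}

theorem IsClose.mem_hull_or_lt_inner (h : IsClose hi S T) (hκ : 0 ≤ κ) (hhi : 100 * κ ≤ hi)
    (hx : x ∈ S.region κ) (hx0 : x ≠ 0) (hy : y ∈ T.region κ) (hy0 : y ≠ 0) :
    (∃ v ∈ S.inner, y ∈ hull ℝ {v.toSpace}) ∨ κ * ‖x‖ * ‖y‖ < ⟪x, y⟫_ℝ := by
  have hsq : κ ^ 2 * (10000 : ℤ) ≤ (hi * hi : ℤ) := by
    push_cast
    nlinarith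
  have hpair {q : IntVec} (hq : ∀ p ∈ S.verts, q.CosSqGt (hi * hi) 10000 p) :
      ∀ p ∈ IntVec.toSpace '' {p | p ∈ S.verts},
        κ * ‖q.toSpace‖ * ‖p‖ < ⟪q.toSpace, p⟫_ℝ :=
    Set.forall_mem_image.2 fun p hp ↦ (hq p hp).lt_inner (by norm_num) hsq
  rcases hS : S.inner with _ | v
  · refine .inr ((mem_hull_singleton_or_lt_inner_of_close hκ (v := 0) (by simp) ?_
      hx.1 hx0 hy.1).resolve_left ?_)
    · refine Set.forall_mem_image.2 fun q hq ↦ .inr (hpair ((h q hq).resolve_left ?_))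
      simp [hS]
    · simpa [Submodule.mem_span_singleton] using hy0
  · refine (mem_hull_singleton_or_lt_inner_of_close hκ (hx.2.1 v hS) ?_ hx.1 hx0 hy.1).imp_left
      fun hv ↦ ⟨v, rfl, hv⟩
    refine Set.forall_mem_image.2 fun q hq ↦ (h q hq).imp (fun hqv ↦ ?_) hpair
    rw [hS, Option.mem_some_iff] at hqv
    rw [hqv]

theorem IsFar.inner_lt (h : IsFar lo S T) (hlo : lo ≤ 100 * κ) (hκ : κ ≤ 1)
    (hx : x ∈ S.region κ) (hx0 : x ≠ 0) (hy : y ∈ T.region κ) (hy0 : y ≠ 0) :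
    ⟪x, y⟫_ℝ < κ * ‖x‖ * ‖y‖ := by
  obtain ⟨p, -, q, -, hS, hT⟩ := h
  have hσ : √((100 - lo) / 200 : ℝ) ^ 2 = (100 - lo) / 200 := Real.sq_sqrt (by linarith)
  have hσ' : √((100 - lo) / 200 : ℝ) ^ 2 * (200 : ℤ) ≤ (100 - lo : ℤ) := by
    rw [hσ]
    push_cast
    linarith
  have hSx := lt_inner_of_mem_hull (by positivity) (Set.forall_mem_image.2 fun p' hp' ↦
    (hS p' hp').lt_inner (by norm_num) hσ') hx.1 hx0
  have hTy := lt_inner_of_mem_hull (by positivity) (Set.forall_mem_image.2 fun q' hq' ↦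
    (hT q' hq').lt_inner (by norm_num) hσ') hy.1 hy0
  have hneg : (q - p).toSpace = -(p - q).toSpace := by simp only [IntVec.toSpace_sub, neg_sub]
  rw [hneg, norm_neg] at hTy
  calc ⟪x, y⟫_ℝ
      < (1 - 2 * √((100 - lo) / 200 : ℝ) ^ 2) * ‖x‖ * ‖y‖ :=
        inner_lt_of_opposite_caps (by positivity) hSx hTy
    _ ≤ κ * ‖x‖ * ‖y‖ := by
      rw [hσ]
      gcongr
      linarith

theorem IsShielded.inner_lt (h : IsShielded S T) (hκ : 0 ≤ κ) (hx : x ∈ S.region κ)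
    (hy : y ∈ T.region κ) (hy0 : y ≠ 0) : ⟪x, y⟫_ℝ < κ * ‖x‖ * ‖y‖ := by
  obtain ⟨v, hv, hvT⟩ := h
  have hvy : 0 < ⟪v.toSpace, y⟫_ℝ := by
    have := lt_inner_of_mem_hull le_rfl (u := v.toSpace)
      (Set.forall_mem_image.2 fun q hq ↦ ?_) hy.1 hy0
    · simpa using this
    · rw [zero_mul, IntVec.inner_toSpace]
      exact_mod_cast (hvT q hq).1
  have hobtuse : ⟪x, y⟫_ℝ * ⟪v.toSpace, v.toSpace⟫_ℝ ≤ ⟪x, v.toSpace⟫_ℝ * ⟪v.toSpace, y⟫_ℝ := by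
    refine inner_mul_inner_le_of_mem_hull (Set.forall_mem_image.2 fun p hp ↦
      Set.forall_mem_image.2 fun q hq ↦ ?_) hx.1 hy.1
    simp only [IntVec.inner_toSpace]
    exact_mod_cast (hvT q hq).2 p hp
  have hv0 : 0 < ‖v.toSpace‖ := norm_pos_iff.2 fun hv0 ↦ by simp [hv0] at hvy
  have hxv := hx.2.2 v hv
  refine lt_of_mul_lt_mul_right ?_ (sq_nonneg ‖v.toSpace‖)
  calc ⟪x, y⟫_ℝ * ‖v.toSpace‖ ^ 2 ≤ ⟪x, v.toSpace⟫_ℝ * ⟪v.toSpace, y⟫_ℝ := by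
        rwa [← real_inner_self_eq_norm_sq]
    _ < κ * ‖x‖ * ‖v.toSpace‖ * ⟪v.toSpace, y⟫_ℝ := by gcongr
    _ ≤ κ * ‖x‖ * ‖v.toSpace‖ * (‖v.toSpace‖ * ‖y‖) := by
      gcongr
      exact real_inner_le_norm _ _
    _ = κ * ‖x‖ * ‖y‖ * ‖v.toSpace‖ ^ 2 := by ring

end Separation

end Tile

/-- The colouring of a facet: with one colour, or with one colour inside the arc of the points at
unit distance from `v` and another one outside. -/
inductive Label where
  | solid (color : Fin 7)
  | split (v : IntVec) (inner outer : Fin 7)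

/-- A coloured triangular facet of a polyhedron, with its vertices in counterclockwise order when
seen from outside. -/
structure Facet where
  (a b c : IntVec)
  label : Label

namespace Facet

/-- The vertices of the facet. -/
def verts (F : Facet) : List IntVec := [F.a, F.b, F.c]

/-- The monochromatic pieces of the facet. -/
def tiles (F : Facet) : List Tile :=
  match F.label with
  | .solid k => [⟨F.verts, none, none, k⟩]
  | .split v k l => [⟨F.verts, some v, none, k⟩, ⟨F.verts, none, some v, l⟩]

/-- The cone over the facet. -/
def cone (F : Facet) : PointedCone ℝ Space := hull ℝ (IntVec.toSpace '' {p | p ∈ F.verts})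

/-- An outer normal vector. The plane spanned by the facet consists of the `p` with
`F.normal.dot p = F.det`. -/
def normal (F : Facet) : IntVec := (F.b - F.a).cross (F.c - F.a)

/-- The determinant of the three vertices. -/
def det (F : Facet) : ℤ := F.a.dot (F.b.cross F.c)

theorem span_verts {F : Facet} (hF : F.det ≠ 0) :
    Submodule.span ℝ (IntVec.toSpace '' {p | p ∈ F.verts}) = ⊤ := by
  refine Submodule.eq_top_iff'.2 fun x ↦ ?_
  have hmem {p : IntVec} (hp : p ∈ F.verts) (t : ℝ) :
      t • p.toSpace ∈ Submodule.span ℝ (IntVec.toSpace '' {p | p ∈ F.verts}) :=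
    Submodule.smul_mem _ t (Submodule.subset_span ⟨p, hp, rfl⟩)
  have hdet : (F.det : ℝ) ≠ 0 := by exact_mod_cast hF
  rw [← Submodule.smul_mem_iff _ hdet, det, IntVec.cramer]
  exact add_mem (add_mem (hmem (by simp [verts]) _) (hmem (by simp [verts]) _))
    (hmem (by simp [verts]) _)

theorem normal_dot_of_mem_verts {F : Facet} {p : IntVec} (hp : p ∈ F.verts) :
    F.normal.dot p = F.det := by
  simp only [verts, List.mem_cons, List.not_mem_nil, or_false] at hp
  rcases hp with hp | hp | hp <;>
    simp only [hp, normal, det, IntVec.dot, IntVec.cross, IntVec.sub_x, IntVec.sub_y,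
      IntVec.sub_z] <;> ring

theorem exists_mem_region_of_mem_cone {F : Facet} {x : Space} (hx : x ∈ F.cone) (κ : ℝ) :
    ∃ T ∈ F.tiles, x ∈ T.region κ := by
  obtain ⟨a, b, c, k | ⟨v, k, l⟩⟩ := F
  · exact ⟨_, List.mem_singleton_self _, hx, by simp, by simp⟩
  · rcases le_or_gt (κ * ‖x‖ * ‖v.toSpace‖) ⟪x, v.toSpace⟫_ℝ with h | h
    · exact ⟨_, List.mem_cons_self, hx, by simpa using h, by simp⟩
    · exact ⟨_, List.mem_cons_of_mem _ (List.mem_singleton_self _), hx, by simp, by simpa using h⟩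

/-- The permutation of the colours induced by the rotation `IntVec.rot` of the tilings. -/
def rotColor : Fin 7 → Fin 7 := ![0, 2, 3, 1, 5, 6, 4]

/-- The image of the facet under the symmetry of the tilings. -/
def rot (F : Facet) : Facet where
  a := F.a.rot
  b := F.b.rot
  c := F.c.rot
  label :=
    match F.label with
    | .solid k => .solid (rotColor k)
    | .split v k l => .split v.rot (rotColor k) (rotColor l)

end Facet

/-- The facets obtained from representatives `L` of the orbits under the symmetry. -/
def orbits (L : List Facet) : List Facet := L ++ L.map Facet.rot ++ L.map fun F ↦ F.rot.rot

/-- The facets `L` form a convex polyhedron around the origin, and their colouring avoids unit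
distance whenever the critical cosine lies between `lo / 100` and `hi / 100`. -/
structure IsCertificate (lo hi : ℤ) (L : List Facet) : Prop where
  ne_nil : L ≠ []
  det_pos : ∀ F ∈ L, 0 < F.det
  /-- The facet `G` shares with `F` the edge opposite to `p`. -/
  convex : ∀ F ∈ L, ∀ p ∈ F.verts, ∃ G ∈ L,
    (∀ q ∈ F.verts, q ≠ p → q ∈ G.verts) ∧ G.normal.dot p < G.det
  close_self : ∀ T ∈ L.flatMap Facet.tiles, T.IsClose hi T
  separated : ∀ k, ((L.flatMap Facet.tiles).filter (·.color = k)).Pairwise fun S T ↦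
    S.IsSeparated lo hi T ∨ T.IsSeparated lo hi S
  center : ∀ S ∈ L.flatMap Facet.tiles, ∀ v ∈ S.inner, S.color ≠ 0 ∧
    ∃ T ∈ L.flatMap Facet.tiles, v ∈ T.verts ∧ T.inner = none ∧ T.outer = none ∧ T.color = 0

namespace IsCertificate

variable {lo hi : ℤ} {L : List Facet} {κ : ℝ}

theorem exists_mem_cone (h : IsCertificate lo hi L) (x : Space) : ∃ F ∈ L, x ∈ F.cone := by
  have : Finite {F // F ∈ L} := (List.finite_toSet L).to_subtype
  have : Nonempty {F // F ∈ L} := nonempty_subtype.2 (List.exists_mem_of_ne_nil L h.ne_nil)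
  let ℓ (F : {F // F ∈ L}) : Space →ₗ[ℝ] ℝ := (F.1.det : ℝ)⁻¹ • innerₛₗ ℝ F.1.normal.toSpace
  have hdet (F : {F // F ∈ L}) : (0 : ℝ) < F.1.det := by exact_mod_cast h.det_pos F.1 F.2
  have hℓ (F : {F // F ∈ L}) (p : IntVec) : ℓ F p.toSpace = F.1.normal.dot p / F.1.det := by
    simp [ℓ, IntVec.inner_toSpace, inv_mul_eq_div]
  have hℓ_one (F : {F // F ∈ L}) {p : IntVec} (hp : p ∈ F.1.verts) : ℓ F p.toSpace = 1 := by
    rw [hℓ, Facet.normal_dot_of_mem_verts hp, div_self (hdet F).ne']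
  obtain ⟨F, hF⟩ := exists_mem_hull_of_convex (ℓ := ℓ)
    (fun F ↦ Facet.span_verts (h.det_pos F.1 F.2).ne')
    (fun F ↦ Set.forall_mem_image.2 fun p ↦ hℓ_one F)
    (fun F ↦ Set.forall_mem_image.2 fun p hp ↦ by
      obtain ⟨G, hGL, hG, hGp⟩ := h.convex F.1 F.2 p hp
      refine ⟨⟨G, hGL⟩, Set.forall_mem_image.2 fun q hq hqp ↦ hℓ_one _ (hG q hq ?_), ?_⟩
      · exact fun h ↦ hqp (congrArg _ h)
      · rw [hℓ, div_lt_one (hdet _)]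
        exact_mod_cast hGp) x
  exact ⟨F, F.2, hF⟩

theorem exists_mem_region (h : IsCertificate lo hi L) (κ : ℝ) (x : Space) :
    ∃ T ∈ L.flatMap Facet.tiles, x ∈ T.region κ := by
  obtain ⟨F, hF, hx⟩ := h.exists_mem_cone x
  obtain ⟨T, hT, hxT⟩ := Facet.exists_mem_region_of_mem_cone hx κ
  exact ⟨T, List.mem_flatMap.2 ⟨F, hF, hT⟩, hxT⟩

theorem isSeparated_or_isSeparated (h : IsCertificate lo hi L) {S T : Tile}
    (hS : S ∈ L.flatMap Facet.tiles) (hT : T ∈ L.flatMap Facet.tiles) (hST : S.color = T.color) :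
    S.IsSeparated lo hi T ∨ T.IsSeparated lo hi S :=
  (h.separated T.color).forall_of_forall_of_flip
    (fun U hU ↦ .inl (.inl (h.close_self U (List.mem_of_mem_filter hU))))
    ((h.separated T.color).imp Or.symm)
    (List.mem_filter.2 ⟨hS, by simpa using hST⟩) (List.mem_filter.2 ⟨hT, by simp⟩)

theorem exists_mem_region_color_eq_zero (h : IsCertificate lo hi L) {S : Tile}
    (hS : S ∈ L.flatMap Facet.tiles) {v : IntVec} (hv : v ∈ S.inner) {y : Space}
    (hy : y ∈ hull ℝ {v.toSpace}) :
    ∃ T ∈ L.flatMap Facet.tiles, y ∈ T.region κ ∧ T.color = 0 := by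
  obtain ⟨-, T, hT, hvT, hin, hout, hT0⟩ := h.center S hS v hv
  have hvT' : v.toSpace ∈ T.cone := subset_hull (Set.mem_image_of_mem _ hvT)
  have hyT : y ∈ T.cone := Submodule.span_le.2 (Set.singleton_subset_iff.2 hvT') hy
  exact ⟨T, hT, ⟨hyT, by simp [hin], by simp [hout]⟩, hT0⟩

theorem exists_avoidsCos (h : IsCertificate lo hi L) (hκ0 : 0 ≤ κ) (hκ1 : κ ≤ 1)
    (hlo : lo ≤ 100 * κ) (hhi : 100 * κ ≤ hi) :
    ∃ f, AvoidsCos κ f := by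
  have hchoice (x : Space) : ∃ T ∈ L.flatMap Facet.tiles, x ∈ T.region κ ∧
      ∀ S ∈ L.flatMap Facet.tiles, x ∈ S.region κ → S.color = 0 → T.color = 0 := by
    by_cases h0 : ∃ T ∈ L.flatMap Facet.tiles, x ∈ T.region κ ∧ T.color = 0
    · obtain ⟨T, hT, hx, hT0⟩ := h0
      exact ⟨T, hT, hx, fun _ _ _ _ ↦ hT0⟩
    · obtain ⟨T, hT, hx⟩ := h.exists_mem_region κ x
      exact ⟨T, hT, hx, fun S hS hxS hS0 ↦ absurd ⟨S, hS, hxS, hS0⟩ h0⟩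
  choose t ht hmem hzero using hchoice
  have hne {x y : Space} (hx : x ≠ 0) (hy : y ≠ 0) (hcol : (t x).color = (t y).color)
      (hsep : (t x).IsSeparated lo hi (t y)) : ⟪x, y⟫_ℝ ≠ κ * ‖x‖ * ‖y‖ := by
    rcases hsep with hclose | hfar | hshield
    · rcases hclose.mem_hull_or_lt_inner hκ0 hhi (hmem x) hx (hmem y) hy with ⟨v, hv, hyv⟩ | hlt
      · obtain ⟨T, hT, hyT, hT0⟩ := h.exists_mem_region_color_eq_zero (ht x) hv hyv
        exact absurd (hcol.trans (hzero y T hT hyT hT0)) (h.center _ (ht x) v hv).1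
      · exact hlt.ne'
    · exact (hfar.inner_lt hlo hκ1 (hmem x) hx (hmem y) hy).ne
    · exact (hshield.inner_lt hκ0 (hmem x) (hmem y) hy).ne
  refine ⟨fun x ↦ (t x).color, fun x y hx hy hxy hcol ↦ ?_⟩
  rcases h.isSeparated_or_isSeparated (ht x) (ht y) hcol with hsep | hsep
  · exact hne hx hy hcol hsep hxy
  · refine hne hy hx hcol.symm hsep ?_
    rw [real_inner_comm, hxy]
    ring

end IsCertificate

/-- The tiling for critical cosines in `[0.30, 0.37]`, found by numerical optimization. -/
def lowFacets : List Facet :=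
  let p0 : IntVec := ⟨565, 565, 565⟩
  let p1 : IntVec := ⟨908, 106, 416⟩
  let p2 : IntVec := ⟨874, 536, 76⟩
  let p3 : IntVec := ⟨-582, -582, -582⟩
  let p4 : IntVec := ⟨-7, -667, -756⟩
  let p5 : IntVec := ⟨-308, -226, -950⟩
  let p6 : IntVec := ⟨733, 176, -702⟩
  let p7 : IntVec := ⟨745, -409, -556⟩
  let p8 : IntVec := ⟨814, -605, 7⟩
  let p9 : IntVec := ⟨273, 428, -893⟩
  orbits [
    ⟨p0, p1, p2, .solid 0⟩, ⟨p0, p2, p1.rot, .solid 0⟩, ⟨p3, p5, p4, .solid 0⟩,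
    ⟨p3, p4.rot, p5, .solid 0⟩, ⟨p1, p7, p2, .solid 1⟩, ⟨p1, p8, p7, .solid 1⟩,
    ⟨p2, p6, p9, .solid 4⟩, ⟨p1, p2.rot.rot, p8, .solid 6⟩, ⟨p2, p9, p8.rot, .solid 4⟩,
    ⟨p2, p7, p6, .solid 1⟩, ⟨p4, p5, p6, .solid 5⟩, ⟨p5, p9, p6, .solid 5⟩, ⟨p4, p6, p7, .solid 5⟩,
    ⟨p5, p4.rot, p9, .solid 3⟩, ⟨p7, p8, p9.rot.rot, .solid 2⟩, ⟨p4, p7, p9.rot.rot, .solid 2⟩]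

theorem isCertificate_lowFacets : IsCertificate 30 37 lowFacets where
  ne_nil := by decide +kernel
  det_pos := by decide +kernel
  convex := by decide +kernel
  close_self := by decide +kernel
  separated := by decide +kernel
  center := by decide +kernel

/-- The tiling for critical cosines in `[0.37, 0.43]`, found by numerical optimization. -/
def midFacets : List Facet :=
  let p0 : IntVec := ⟨-2024, 5, -83⟩
  let p1 : IntVec := ⟨-2016, 123, -183⟩
  let p2 : IntVec := ⟨-1916, 530, -282⟩
  let p3 : IntVec := ⟨-1925, -437, -412⟩
  let p4 : IntVec := ⟨-1999, -269, 293⟩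
  let p5 : IntVec := ⟨-1743, 852, -554⟩
  let p6 : IntVec := ⟨-1812, -797, 305⟩
  let p7 : IntVec := ⟨-1683, -656, -925⟩
  let p8 : IntVec := ⟨-1619, 1134, 572⟩
  let p9 : IntVec := ⟨-1539, -1345, -174⟩
  let p10 : IntVec := ⟨-1517, 1327, 262⟩
  let p11 : IntVec := ⟨-1355, -678, 1348⟩
  let p12 : IntVec := ⟨-1393, 927, -1132⟩
  let p13 : IntVec := ⟨-1164, -1164, -1164⟩
  let p14 : IntVec := ⟨-1158, 746, 1375⟩
  let p15 : IntVec := ⟨-546, 1897, 181⟩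
  let p16 : IntVec := ⟨-567, 783, 1767⟩
  let p17 : IntVec := ⟨-579, -301, 1825⟩
  let p18 : IntVec := ⟨-20, 1954, 581⟩
  let p19 : IntVec := ⟨-227, 1351, 1441⟩
  let p20 : IntVec := ⟨-86, 1559, 1324⟩
  let p21 : IntVec := ⟨12, 1884, 751⟩
  let p22 : IntVec := ⟨70, 1120, 1720⟩
  let p23 : IntVec := ⟨323, 1845, 631⟩
  let p24 : IntVec := ⟨310, 897, 1817⟩
  let p25 : IntVec := ⟨1176, 1176, 1176⟩
  orbits [
    ⟨p9, p7.rot, p1.rot, .split p11 3 6⟩, ⟨p0, p4, p8, .solid 1⟩, ⟨p1, p2, p5, .solid 2⟩,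
    ⟨p0, p8, p1, .solid 1⟩, ⟨p2, p8, p10, .split p11 1 0⟩, ⟨p1, p7, p3, .split p11.rot.rot 2 5⟩,
    ⟨p4, p11, p14, .solid 1⟩, ⟨p3, p9, p6, .solid 5⟩, ⟨p1, p5, p9.rot.rot, .solid 2⟩,
    ⟨p5, p12, p9.rot.rot, .solid 2⟩, ⟨p0, p1, p3, .split p11.rot.rot 2 5⟩, ⟨p1, p8, p2, .solid 1⟩,
    ⟨p7, p13, p9, .solid 5⟩, ⟨p0, p3, p4, .solid 5⟩, ⟨p4, p6, p11, .solid 1⟩,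
    ⟨p3, p7, p9, .solid 5⟩, ⟨p11, p10.rot, p17, .solid 0⟩, ⟨p2, p10, p5, .split p11 1 0⟩,
    ⟨p9, p13, p7.rot, .solid 5⟩, ⟨p8, p14, p20, .solid 4⟩, ⟨p3, p6, p4, .solid 5⟩,
    ⟨p6, p12.rot, p11, .solid 3⟩, ⟨p5, p10, p12, .solid 0⟩, ⟨p6, p9, p12.rot, .solid 3⟩,
    ⟨p4, p14, p8, .solid 1⟩, ⟨p8, p15, p10, .solid 4⟩, ⟨p8, p20, p15, .solid 4⟩,
    ⟨p10, p11.rot.rot, p12, .solid 0⟩, ⟨p10, p15, p17.rot.rot, .solid 0⟩, ⟨p11, p17, p16, .solid 6⟩,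
    ⟨p16, p17, p18.rot, .solid 6⟩, ⟨p15, p20, p18, .solid 4⟩, ⟨p18, p20, p21, .solid 4⟩,
    ⟨p14, p16, p19, .solid 4⟩, ⟨p14, p19, p20, .solid 4⟩, ⟨p16, p24, p22, .split p11 6 3⟩,
    ⟨p22, p24, p25, .solid 3⟩, ⟨p24, p21.rot, p23.rot, .split p11 6 3⟩,
    ⟨p24, p23.rot, p25, .solid 3⟩, ⟨p18.rot, p21.rot, p24, .split p11 6 3⟩,
    ⟨p15, p18, p17.rot.rot, .solid 5⟩, ⟨p11, p16, p14, .solid 6⟩, ⟨p19, p22, p20, .solid 3⟩,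
    ⟨p20, p23, p21, .solid 2⟩, ⟨p16, p18.rot, p24, .split p11 6 3⟩, ⟨p16, p22, p19, .split p11 6 3⟩,
    ⟨p20, p25, p23, .solid 2⟩, ⟨p20, p22, p25, .solid 3⟩]

set_option maxHeartbeats 400000 in
-- The separation criteria are evaluated on all pairs of pieces of the same colour.
theorem isCertificate_midFacets : IsCertificate 37 43 midFacets where
  ne_nil := by decide +kernel
  det_pos := by decide +kernel
  convex := by decide +kernel
  close_self := by decide +kernel
  separated := by decide +kernel
  center := by decide +kernel

/-- The tiling for critical cosines in `[0.43, 0.50]`, found by numerical optimization. -/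
def highFacets : List Facet :=
  let p0 : IntVec := ⟨-1017, -94, -87⟩
  let p1 : IntVec := ⟨-986, 11, -132⟩
  let p2 : IntVec := ⟨-1014, 171, -38⟩
  let p3 : IntVec := ⟨-952, -230, -246⟩
  let p4 : IntVec := ⟨-894, 344, -213⟩
  let p5 : IntVec := ⟨-867, -446, 190⟩
  let p6 : IntVec := ⟨-861, 476, 268⟩
  let p7 : IntVec := ⟨-747, -700, -114⟩
  let p8 : IntVec := ⟨-822, 555, 213⟩
  let p9 : IntVec := ⟨-841, -315, -483⟩
  let p10 : IntVec := ⟨-728, 414, -544⟩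
  let p11 : IntVec := ⟨-628, -424, 683⟩
  let p12 : IntVec := ⟨-610, 332, 745⟩
  let p13 : IntVec := ⟨-590, -590, -590⟩
  let p14 : IntVec := ⟨-269, -351, 908⟩
  let p15 : IntVec := ⟨-392, 952, -1⟩
  let p16 : IntVec := ⟨-201, 480, 885⟩
  let p17 : IntVec := ⟨-97, 548, 866⟩
  let p18 : IntVec := ⟨-128, 991, 249⟩
  let p19 : IntVec := ⟨20, 961, 332⟩
  let p20 : IntVec := ⟨34, 786, 619⟩
  let p21 : IntVec := ⟨176, 366, 901⟩
  let p22 : IntVec := ⟨573, 573, 573⟩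
  orbits [
    ⟨p6, p11, p12, .solid 1⟩, ⟨p0, p5, p2, .solid 1⟩, ⟨p7, p0.rot, p1.rot, .split p11 3 6⟩,
    ⟨p2, p6, p8, .split p11 1 0⟩, ⟨p4, p15, p10, .solid 0⟩, ⟨p2, p8, p4, .split p11 1 0⟩,
    ⟨p5, p7, p10.rot, .solid 3⟩, ⟨p7, p3.rot, p0.rot, .split p11 3 6⟩, ⟨p0, p3, p7, .solid 5⟩,
    ⟨p7, p9.rot, p3.rot, .split p11 3 6⟩, ⟨p0, p7, p5, .solid 5⟩, ⟨p2, p11, p6, .solid 1⟩,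
    ⟨p7, p9, p13, .solid 5⟩, ⟨p2, p10, p7.rot.rot, .solid 2⟩, ⟨p0, p2, p1, .solid 1⟩,
    ⟨p2, p4, p10, .solid 2⟩, ⟨p2, p5, p11, .solid 1⟩, ⟨p7, p13, p9.rot, .solid 5⟩,
    ⟨p3, p9, p7, .solid 5⟩, ⟨p5, p10.rot, p11, .solid 3⟩, ⟨p1, p2, p7.rot.rot, .solid 2⟩,
    ⟨p10, p15, p14.rot.rot, .solid 0⟩, ⟨p11, p10.rot, p14, .solid 0⟩, ⟨p11, p14, p12, .solid 6⟩,
    ⟨p12, p14, p16, .solid 6⟩, ⟨p17, p20, p18, .solid 4⟩, ⟨p6, p12, p8, .solid 4⟩,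
    ⟨p4, p8, p15, .solid 0⟩, ⟨p8, p12, p18, .solid 4⟩, ⟨p16, p17, p18, .solid 4⟩,
    ⟨p12, p16, p18, .solid 4⟩, ⟨p14, p15.rot, p18.rot, .solid 6⟩,
    ⟨p18.rot, p19.rot, p21, .split p11 6 3⟩, ⟨p17, p22, p20, .solid 3⟩, ⟨p8, p18, p15, .solid 4⟩,
    ⟨p18, p20, p19, .solid 4⟩, ⟨p14, p18.rot, p16, .solid 6⟩, ⟨p16, p18.rot, p21, .split p11 6 3⟩,
    ⟨p16, p21, p17, .split p11 6 3⟩, ⟨p19, p20, p21.rot.rot, .solid 2⟩, ⟨p17, p21, p22, .solid 3⟩,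
    ⟨p21, p20.rot, p22, .solid 3⟩]

set_option maxHeartbeats 400000 in
-- The separation criteria are evaluated on all pairs of pieces of the same colour.
theorem isCertificate_highFacets : IsCertificate 43 50 highFacets where
  ne_nil := by decide +kernel
  det_pos := by decide +kernel
  convex := by decide +kernel
  close_self := by decide +kernel
  separated := by decide +kernel
  center := by decide +kernel

theorem exists_avoidsCos {κ : ℝ} (hlo : 30 ≤ 100 * κ) (hhi : 100 * κ ≤ 50) :
    ∃ f, AvoidsCos κ f := by
  have hκ0 : 0 ≤ κ := by linarith
  have hκ1 : κ ≤ 1 := by linarith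
  rcases le_total (100 * κ) 37 with hlow | hlow
  · exact isCertificate_lowFacets.exists_avoidsCos hκ0 hκ1 (mod_cast hlo) (mod_cast hlow)
  rcases le_total (100 * κ) 43 with hmid | hmid
  · exact isCertificate_midFacets.exists_avoidsCos hκ0 hκ1 (mod_cast hlow) (mod_cast hmid)
  · exact isCertificate_highFacets.exists_avoidsCos hκ0 hκ1 (mod_cast hmid) (mod_cast hhi)

end SphereColoring

theorem sphere_seven_coloring_small_radius :
    ∀ r : ℝ, (0.85 : ℝ) ≤ r → r ≤ 1 →
      ∃ f : {x : EuclideanSpace ℝ (Fin 3) // ‖x‖ = r} → Fin 7,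
        ∀ x y : {x : EuclideanSpace ℝ (Fin 3) // ‖x‖ = r},
          ‖(x : EuclideanSpace ℝ (Fin 3)) - (y : EuclideanSpace ℝ (Fin 3))‖ = 1 →
            f x ≠ f y := by
  intro r hr0 hr1
  have hr : 0 < r := by linarith
  have hlo : 30 ≤ 100 * (1 - 1 / (2 * r ^ 2)) := by
    have : 1 / (2 * r ^ 2) ≤ 1 / (2 * 0.85 ^ 2) := by gcongr
    linarith
  have hhi : 100 * (1 - 1 / (2 * r ^ 2)) ≤ 50 := by
    have : 1 / (2 * 1 ^ 2) ≤ 1 / (2 * r ^ 2) := by gcongr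
    linarith
  obtain ⟨f, hf⟩ := SphereColoring.exists_avoidsCos hlo hhi
  have hne (x : {x : EuclideanSpace ℝ (Fin 3) // ‖x‖ = r}) : x.1 ≠ 0 :=
    norm_pos_iff.1 (by rwa [x.2])
  exact ⟨fun x ↦ f x, fun x y hxy ↦ hf x y (hne x) (hne y)
    (SphereColoring.inner_eq_of_norm_sub_eq_one hr.ne' x.2 y.2 hxy)⟩
end
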